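/- arXiv:1203.0447 — 6 statements merged into one kernel-verified Lean document; each statement's English description precedes it below -/
import Mathlib

section
/- Let f be a probability density function on ℝ such that f(y)·|y|^{α+1}/c → 1 as |y| → ∞ for some constants α ∈ (1,2) and c ∈ (0,∞), and assume ∫_ℝ y f(y) dy = 0. Then the random walk with jump density f, i.e. the Markov chain on ℝ with transition kernel p(x,dy) = f(y−x) dy, is recurrent. -/
/-!
The walk started at `x` is the translate by `x` of a sum of independent steps with law
`μ = f(y) dy`, so everything is phrased through the convolution powers `convPow μ n` (`nStep_eq`).

* Since `a > 1`, the steps are integrable; they are centred, so the weak law of large numbers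
  holds (`weak_law`).
* The Chung–Ornstein argument turns the weak law into `∑ₙ ℙ(|Sₙ| < 1) = ∞`
  (`potential_unit_eq_top`). It rests on a maximum principle (`potential_le`): truncated expected
  numbers of visits to a unit interval are at most those of the centred walk to `(-1, 1)`.
* The tail condition makes `f` bounded below on compact sets away from `0`, hence `f ∗ f` is
  bounded below on every compact set (`two_step_lower`). From `(-1, 1)` the walk thus enters any
  bounded non-null set in two steps with probability bounded below, which carries the
  divergence over to all such sets (`potential_eq_top`).

Uniform measure on `[0, 1]` serves as irreducibility measure, and irreducibility is a consequence
of the divergence.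
-/

open MeasureTheory Filter Topology Set
open scoped ENNReal

/-- The one-step transition kernel `p(x, dy) = f_x(y - x) dy` of a stable-like chain. -/
noncomputable def stepKernel (f : ℝ → ℝ → ℝ) (x : ℝ) : Measure ℝ :=
  volume.withDensity fun y => ENNReal.ofReal (f x (y - x))

/-- The `n`-step transition kernel `p^n(x, ·)`. -/
noncomputable def nStep (f : ℝ → ℝ → ℝ) : ℕ → ℝ → Measure ℝ
  | 0, x => Measure.dirac x
  | n + 1, x => (stepKernel f x).bind (nStep f n)

/-- `{f_x : x ∈ ℝ}` is a family of probability density functions on `ℝ`. -/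
def IsDensityFamily (f : ℝ → ℝ → ℝ) : Prop :=
  ∀ x, Measurable (f x) ∧ (∀ y, 0 ≤ f x y) ∧ (∫ y, f x y) = 1

/-- Condition (C1): `x ↦ f_x(y)` is Borel measurable for every `y`. -/
def CondC1 (f : ℝ → ℝ → ℝ) : Prop := ∀ y, Measurable fun x => f x y

/-- Condition (C2): `f_x(y) ~ c(x) |y|^{-α(x)-1}` as `|y| → ∞`, for every `x`. -/
def CondC2 (a c : ℝ → ℝ) (f : ℝ → ℝ → ℝ) : Prop :=
  ∀ x, Tendsto (fun y => f x y * |y| ^ (a x + 1) / c x) (cocompact ℝ) (nhds 1)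

/-- Condition (C3) with constant `k > 0`: the convergence in (C2) is uniform in
`x ∉ [-k,k]`. -/
def CondC3 (a c : ℝ → ℝ) (f : ℝ → ℝ → ℝ) (k : ℝ) : Prop :=
  0 < k ∧ ∀ ε > (0 : ℝ), ∃ R : ℝ, ∀ y : ℝ, R ≤ |y| →
    ∀ x ∉ Icc (-k) k, |f x y * |y| ^ (a x + 1) / c x - 1| < ε

/-- Condition (C4): `inf_{x ∈ C} c(x) > 0` for every compact `C ⊆ [-k,k]^c`. -/
def CondC4 (c : ℝ → ℝ) (k : ℝ) : Prop :=
  ∀ C : Set ℝ, IsCompact C → C ⊆ (Icc (-k) k)ᶜ → ∃ ε > (0 : ℝ), ∀ x ∈ C, ε ≤ c x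

/-- Condition (C5): there is `l > 0` such that for every compact `C ⊆ [-l,l]^c` of
positive Lebesgue measure, `inf_{x ∈ [-k,k]} ∫_{C-x} f_x(y) dy > 0`. -/
def CondC5 (f : ℝ → ℝ → ℝ) (k l : ℝ) : Prop :=
  0 < l ∧ ∀ C : Set ℝ, IsCompact C → C ⊆ (Icc (-l) l)ᶜ → 0 < volume C →
    ∃ ε > (0 : ℝ), ∀ x ∈ Icc (-k) k, ε ≤ ∫ y in C, f x (y - x)

/-- `φ`-irreducibility of the chain with jump densities `f`. -/
def IsIrreducibleWith (f : ℝ → ℝ → ℝ) (φ : Measure ℝ) : Prop :=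
  ∀ x : ℝ, ∀ B : Set ℝ, MeasurableSet B → 0 < φ B → ∃ n : ℕ, 1 ≤ n ∧ 0 < nStep f n x B

/-- The chain is recurrent: it is `φ`-irreducible for some probability measure `φ` and
`∑_n p^n(x,B) = ∞` for every `x` and every `B` with `φ(B) > 0`. -/
def IsRecurrentChain (f : ℝ → ℝ → ℝ) : Prop :=
  ∃ φ : Measure ℝ, IsProbabilityMeasure φ ∧ IsIrreducibleWith f φ ∧
    ∀ x : ℝ, ∀ B : Set ℝ, MeasurableSet B → 0 < φ B → (∑' n : ℕ, nStep f n x B) = ⊤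

/-- The chain is transient: it is `φ`-irreducible for some probability measure `φ` and
there is a countable Borel cover of `ℝ` on each set of which the potential kernel is
uniformly bounded. -/
def IsTransientChain (f : ℝ → ℝ → ℝ) : Prop :=
  (∃ φ : Measure ℝ, IsProbabilityMeasure φ ∧ IsIrreducibleWith f φ) ∧
    ∃ Bs : ℕ → Set ℝ, (∀ j, MeasurableSet (Bs j)) ∧ (⋃ j, Bs j) = univ ∧
      ∀ j, ∃ M : ℝ≥0∞, M ≠ ⊤ ∧ ∀ x : ℝ, (∑' n : ℕ, nStep f n x (Bs j)) ≤ M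

/-- `C` is a small set: `p^n(x, ·) ≥ ν_n` on `C` for some `n ≥ 1` and nontrivial `ν_n`. -/
def IsSmallSet (f : ℝ → ℝ → ℝ) (C : Set ℝ) : Prop :=
  ∃ n : ℕ, 1 ≤ n ∧ ∃ ν : Measure ℝ, ν ≠ 0 ∧
    ∀ x ∈ C, ∀ B : Set ℝ, MeasurableSet B → ν B ≤ nStep f n x B

/-- `C` is a petite set: `∑_n a(n) p^n(x, ·) ≥ ν_a` on `C` for some probability
distribution `a` on `ℕ` and nontrivial measure `ν_a`. -/
def IsPetiteSet (f : ℝ → ℝ → ℝ) (C : Set ℝ) : Prop :=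
  ∃ a : ℕ → ℝ≥0∞, (∑' n, a n) = 1 ∧ ∃ ν : Measure ℝ, ν ≠ 0 ∧
    ∀ x ∈ C, ∀ B : Set ℝ, MeasurableSet B → ν B ≤ ∑' n : ℕ, a n * nStep f n x B

/-- The digamma function `Ψ = Γ'/Γ`. -/
noncomputable def digammaFn (x : ℝ) : ℝ := deriv Real.Gamma x / Real.Gamma x

/-- The constant `R(α)` of the recurrence theorem. -/
noncomputable def Rconst (a : ℝ) : ℝ :=
  (∑' i : ℕ, 1 / ((i + 1 : ℝ) * (2 * (i + 1 : ℝ) - a))) - Real.log 2 / a -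
    (1 / (2 * a)) * (digammaFn ((a + 1) / 2) - digammaFn (a / 2))

/-- The constant `T(α, β)` of the transience theorem, written via Gamma functions:
`T(α,β) = ₂F₁(-α,β,1-α;1) + β B(α+β,1-α) - α B(α+β,1-β)`. -/
noncomputable def Tconst (a b : ℝ) : ℝ :=
  Real.Gamma (1 - a) * Real.Gamma (1 - b) / Real.Gamma (1 - a - b) +
    b * (Real.Gamma (a + b) * Real.Gamma (1 - a) / Real.Gamma (1 + b)) -
    a * (Real.Gamma (a + b) * Real.Gamma (1 - b) / Real.Gamma (1 + a))

/-- `hitProbLe f n x B = ℙ(τ_B ≤ n | X₀ = x)`, defined by first-step decomposition: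
`ℙ_x(τ_B ≤ n+1) = ∫ p(x,dy) (1_B(y) + 1_{B^c}(y) ℙ_y(τ_B ≤ n))`. -/
noncomputable def hitProbLe (f : ℝ → ℝ → ℝ) : ℕ → ℝ → Set ℝ → ℝ≥0∞
  | 0, _, _ => 0
  | n + 1, x, B =>
      ∫⁻ y, (B.indicator (fun _ => (1 : ℝ≥0∞)) y +
        Bᶜ.indicator (fun z => hitProbLe f n z B) y) ∂(stepKernel f x)

/-- `ψ` is a maximal irreducibility measure of the chain. -/
def IsMaximalIrrMeasure (f : ℝ → ℝ → ℝ) (ψ : Measure ℝ) : Prop :=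
  IsProbabilityMeasure ψ ∧ IsIrreducibleWith f ψ ∧
    ∀ φ : Measure ℝ, IsProbabilityMeasure φ → IsIrreducibleWith f φ → φ ≪ ψ

/-- Harris recurrence: the chain is `ψ`-irreducible (`ψ` maximal) and
`ℙ(τ_B < ∞ | X₀ = x) = 1` for all `x` and all `B` with `ψ(B) > 0`. -/
def IsHarrisRecurrentChain (f : ℝ → ℝ → ℝ) : Prop :=
  ∃ ψ : Measure ℝ, IsMaximalIrrMeasure f ψ ∧
    ∀ x : ℝ, ∀ B : Set ℝ, MeasurableSet B → 0 < ψ B →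
      (⨆ n : ℕ, hitProbLe f n x B) = 1

open ProbabilityTheory
open scoped MeasureTheory

/-- The jump distribution `f(y) dy`. -/
noncomputable def jumpLaw (f : ℝ → ℝ) : Measure ℝ :=
  volume.withDensity fun y => ENNReal.ofReal (f y)

/-- The `n`-fold convolution power of `μ`: the law of the sum of `n` independent steps. -/
noncomputable def convPow (μ : Measure ℝ) : ℕ → Measure ℝ
  | 0 => Measure.dirac 0
  | n + 1 => μ ∗ convPow μ n

instance convPow_prob (μ : Measure ℝ) [IsProbabilityMeasure μ] (n : ℕ) :
    IsProbabilityMeasure (convPow μ n) := by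
  induction n with
  | zero => simp only [convPow]; infer_instance
  | succ n ih => simp only [convPow]; infer_instance

lemma conv_apply_eq (μ ν : Measure ℝ) [SFinite ν] {B : Set ℝ} (hB : MeasurableSet B) :
    (μ ∗ ν) B = ∫⁻ y, ν {z | y + z ∈ B} ∂μ := by
  rw [← lintegral_indicator_one hB, Measure.lintegral_conv (measurable_one.indicator hB)]
  refine lintegral_congr fun y => ?_
  have h : MeasurableSet {z | y + z ∈ B} := measurable_const_add y hB
  rw [← lintegral_indicator_one h]
  rfl

lemma jumpLaw_prob {f : ℝ → ℝ} (hnn : ∀ y, 0 ≤ f y)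
    (hint : (∫ y, f y) = 1) : IsProbabilityMeasure (jumpLaw f) := by
  have hi : Integrable f := by
    by_contra h
    rw [integral_undef h] at hint
    exact zero_ne_one hint
  refine ⟨?_⟩
  rw [jumpLaw, withDensity_apply _ MeasurableSet.univ, Measure.restrict_univ,
    ← ofReal_integral_eq_lintegral_ofReal hi (Eventually.of_forall hnn), hint, ENNReal.ofReal_one]

lemma stepKernel_eq_map (f : ℝ → ℝ) (x : ℝ) :
    stepKernel (fun _ => f) x = (jumpLaw f).map (fun y => x + y) := by
  ext B hB
  rw [Measure.map_apply (measurable_const_add x) hB, stepKernel, jumpLaw,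
    withDensity_apply _ hB, withDensity_apply _ (measurable_const_add x hB),
    ← lintegral_indicator hB, ← lintegral_indicator (measurable_const_add x hB),
    ← lintegral_add_left_eq_self _ x]
  refine lintegral_congr fun y => ?_
  simp only [indicator, add_sub_cancel_left]
  rfl

/-- The walk started at `x` is a translate of the walk started at `0`. -/
lemma nStep_eq (f : ℝ → ℝ) [IsProbabilityMeasure (jumpLaw f)] (n : ℕ) :
    ∀ x, nStep (fun _ => f) n x = (convPow (jumpLaw f) n).map (fun y => x + y) := by
  induction n with
  | zero => intro x; simp [nStep, convPow, Measure.map_dirac' (measurable_const_add x)]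
  | succ n ih =>
    intro x
    have hm : Measurable (nStep (fun _ => f) n) := by
      refine Measure.measurable_of_measurable_coe _ fun B hB => ?_
      have h1 : (fun y => nStep (fun _ => f) n y B)
          = fun y => convPow (jumpLaw f) n (Prod.mk y ⁻¹' {p : ℝ × ℝ | p.1 + p.2 ∈ B}) := by
        ext y
        rw [ih, Measure.map_apply (measurable_const_add y) hB]
        rfl
      rw [h1]
      exact measurable_measure_prodMk_left ((measurable_fst.add measurable_snd) hB)
    ext B hB
    have hB' : MeasurableSet {z | x + z ∈ B} := measurable_const_add x hB
    have hmB : Measurable fun y => nStep (fun _ => f) n y B :=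
      (Measure.measurable_coe hB).comp hm
    rw [nStep, Measure.bind_apply hB hm.aemeasurable, stepKernel_eq_map f,
      lintegral_map hmB (measurable_const_add x),
      Measure.map_apply (measurable_const_add x) hB, convPow]
    change _ = (jumpLaw f ∗ convPow (jumpLaw f) n) {z | x + z ∈ B}
    rw [conv_apply_eq _ _ hB']
    refine lintegral_congr fun y => ?_
    rw [ih, Measure.map_apply (measurable_const_add _) hB]
    simp [preimage, add_assoc]

/-- The maximum principle for the truncated potential: the expected number of visits
to an interval `[k, k + 1)` before time `m`, from any starting point `x`, is at most the
supremum over starting points inside the interval (first-step induction when `x` is outside).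
From inside, a visit to the interval is a displacement in `(-1, 1)`. -/
lemma potential_le (μ : Measure ℝ) [IsProbabilityMeasure μ] (k : ℝ) (m : ℕ) (x : ℝ) :
    ∑ n ∈ Finset.range m, convPow μ n {z | x + z ∈ Ico k (k + 1)}
      ≤ ∑ n ∈ Finset.range m, convPow μ n (Ioo (-1) 1) := by
  induction m generalizing x with
  | zero => simp
  | succ m ih =>
    by_cases hx : x ∈ Ico k (k + 1)
    · refine Finset.sum_le_sum fun n _ => measure_mono fun z hz => ?_
      simp only [mem_Ico, mem_ofPred_eq, mem_Ioo] at *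
      constructor <;> linarith
    · have hms : ∀ x : ℝ, MeasurableSet {z | x + z ∈ Ico k (k + 1)} := fun x =>
        measurable_const_add x measurableSet_Ico
      have h0 : convPow μ 0 {z | x + z ∈ Ico k (k + 1)} = 0 := by
        rw [convPow, Measure.dirac_apply' _ (hms x)]
        simpa [indicator] using hx
      rw [Finset.sum_range_succ', h0, add_zero]
      have hmeas : ∀ n, Measurable fun y => convPow μ n {z | x + y + z ∈ Ico k (k + 1)} := by
        intro n
        have hs : MeasurableSet {p : ℝ × ℝ | x + p.1 + p.2 ∈ Ico k (k + 1)} :=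
          ((measurable_const.add measurable_fst).add measurable_snd) measurableSet_Ico
        exact measurable_measure_prodMk_left hs
      have h1 : ∀ n, convPow μ (n + 1) {z | x + z ∈ Ico k (k + 1)}
          = ∫⁻ y, convPow μ n {z | x + y + z ∈ Ico k (k + 1)} ∂μ := by
        intro n
        rw [convPow, conv_apply_eq _ _ (hms x)]
        simp [add_assoc]
      simp_rw [h1]
      rw [← lintegral_finsetSum _ (fun n _ => hmeas n)]
      calc _ ≤ ∫⁻ _, (∑ n ∈ Finset.range m, convPow μ n (Ioo (-1) 1)) ∂μ :=
            lintegral_mono fun y => ih (x + y)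
        _ = ∑ n ∈ Finset.range m, convPow μ n (Ioo (-1) 1) := by simp
        _ ≤ _ := Finset.sum_le_sum_of_subset (Finset.range_subset_range.2 m.le_succ)

lemma potential_big_le (μ : Measure ℝ) [IsProbabilityMeasure μ] (A m : ℕ) :
    ∑ n ∈ Finset.range m, convPow μ n (Ico (-(A : ℝ)) A)
      ≤ 2 * A * ∑ n ∈ Finset.range m, convPow μ n (Ioo (-1) 1) := by
  have hcov : Ico (-(A : ℝ)) A ⊆
      ⋃ j ∈ Finset.range (2 * A), Ico (-(A : ℝ) + j) (-(A : ℝ) + j + 1) := by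
    intro y hy
    have hy0 : 0 ≤ y + A := by linarith [hy.1]
    have hlt := Nat.lt_floor_add_one (y + A)
    have hle := Nat.floor_le hy0
    simp only [mem_iUnion, Finset.mem_range]
    refine ⟨⌊y + A⌋₊, ?_, ?_, ?_⟩
    · rw [Nat.floor_lt hy0]; push_cast; linarith [hy.2]
    · linarith
    · linarith
  calc ∑ n ∈ Finset.range m, convPow μ n (Ico (-(A : ℝ)) A)
      ≤ ∑ n ∈ Finset.range m, ∑ j ∈ Finset.range (2 * A),
          convPow μ n (Ico (-(A : ℝ) + j) (-(A : ℝ) + j + 1)) :=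
        Finset.sum_le_sum fun n _ => (measure_mono hcov).trans (measure_biUnion_finset_le _ _)
    _ = ∑ j ∈ Finset.range (2 * A), ∑ n ∈ Finset.range m,
          convPow μ n (Ico (-(A : ℝ) + j) (-(A : ℝ) + j + 1)) := Finset.sum_comm
    _ ≤ ∑ j ∈ Finset.range (2 * A), ∑ n ∈ Finset.range m, convPow μ n (Ioo (-1) 1) := by
        refine Finset.sum_le_sum fun j _ => ?_
        have := potential_le μ (-(A : ℝ) + j) m 0
        simp only [zero_add] at this
        exact this
    _ = _ := by simp

/-- The weak law of large numbers for centred integrable steps. -/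
lemma weak_law (μ : Measure ℝ) [IsProbabilityMeasure μ] (hi : Integrable id μ)
    (h0 : ∫ y, y ∂μ = 0) {ε : ℝ} (hε : 0 < ε) :
    ∀ᶠ n : ℕ in atTop, 1 / 2 ≤ convPow μ n {y | |y| < ε * n} := by
  let P := Measure.infinitePi (fun _ : ℕ => μ)
  let X : ℕ → (ℕ → ℝ) → ℝ := fun i ω => ω i
  have hX : ∀ i, Measurable (X i) := fun i => measurable_pi_apply i
  have hmap : ∀ i, P.map (X i) = μ := fun i => Measure.infinitePi_map_eval (fun _ : ℕ => μ) i
  have hind : iIndepFun X P :=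
    iIndepFun_infinitePi (P := fun _ : ℕ => μ) (X := fun _ x => x) (fun _ => measurable_id)
  have hSm : ∀ n, Measurable (∑ i ∈ Finset.range n, X i) := fun n =>
    by fun_prop
  have hlaw : ∀ n, P.map (∑ i ∈ Finset.range n, X i) = convPow μ n := by
    intro n
    induction n with
    | zero =>
      simp only [Finset.range_zero, Finset.sum_empty, convPow]
      change P.map (fun _ => (0 : ℝ)) = _
      simp
    | succ n ih =>
      rw [Finset.sum_range_succ, (hind.indepFun_sum_range_succ hX n).map_add_eq_map_conv_map₀
        (hSm n).aemeasurable (hX n).aemeasurable, ih, hmap, Measure.conv_comm, convPow]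
  have hint0 : Integrable (X 0) P := by
    have : Integrable id (P.map (X 0)) := by rw [hmap]; exact hi
    exact this.comp_measurable (hX 0)
  have hmean : ∫ ω, X 0 ω ∂P = 0 := by
    rw [← h0, ← hmap 0]
    exact (integral_map (hX 0).aemeasurable aestronglyMeasurable_id).symm
  have hslln := strong_law_ae_real X hint0 (fun i j hij => hind.indepFun hij)
    (fun i => ⟨(hX i).aemeasurable, (hX 0).aemeasurable, by rw [hmap, hmap]⟩)
  rw [hmean] at hslln
  have hm := tendstoInMeasure_of_tendsto_ae
    (f := fun (n : ℕ) ω => (∑ i ∈ Finset.range n, X i ω) / n) (g := fun _ => 0)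
    (fun n => by
      have : Measurable fun ω => (∑ i ∈ Finset.range n, X i ω) / n := by fun_prop
      exact this.aestronglyMeasurable) hslln
  rw [tendstoInMeasure_iff_norm] at hm
  have hev := (hm ε hε).eventually (gt_mem_nhds (show (0 : ℝ≥0∞) < 1 / 2 by simp))
  filter_upwards [hev, eventually_gt_atTop 0] with n hn hpos
  have hn0 : (0 : ℝ) < n := by exact_mod_cast hpos
  have hms : MeasurableSet {y : ℝ | |y| < ε * n} := measurableSet_lt (by fun_prop) (by fun_prop)
  have hc : convPow μ n {y | |y| < ε * n}ᶜ ≤ 1 / 2 := by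
    rw [← hlaw n, Measure.map_apply (hSm n) hms.compl]
    refine le_trans (measure_mono fun ω hω => ?_) hn.le
    simp only [mem_preimage, mem_compl_iff, mem_ofPred_eq, not_lt, Finset.sum_apply] at hω
    simp only [mem_ofPred_eq, sub_zero, Real.norm_eq_abs, abs_div, Nat.abs_cast]
    rwa [le_div_iff₀ hn0]
  have hadd := prob_add_prob_compl (μ := convPow μ n) hms
  by_contra! hlt
  have : convPow μ n {y | |y| < ε * n} + convPow μ n {y | |y| < ε * n}ᶜ < 1 / 2 + 1 / 2 :=
    ENNReal.add_lt_add_of_lt_of_le (ne_top_of_le_ne_top (by simp) hc) hlt hc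
  rw [hadd, ENNReal.add_halves] at this
  exact lt_irrefl _ this

/-- The Chung–Ornstein argument: the weak law makes the walk spend at least about `K A / 2` of
its first `K A` steps in `[-A, A)`, while the maximum principle allows at most `2 A` times the
number of visits to `(-1, 1)`; as `K` is arbitrary, the latter is infinite. -/
lemma potential_unit_eq_top (μ : Measure ℝ) [IsProbabilityMeasure μ] (hi : Integrable id μ)
    (h0 : ∫ y, y ∂μ = 0) : ∑' n, convPow μ n (Ioo (-1) 1) = ⊤ := by
  set U := ∑' n, convPow μ n (Ioo (-1) 1) with hU
  by_contra hne
  obtain ⟨K, hK⟩ := exists_nat_gt (4 * U.toReal + 1)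
  have hKpos : (0 : ℝ) < K := by linarith [U.toReal_nonneg]
  obtain ⟨N, hN⟩ := eventually_atTop.1 (weak_law μ hi h0 (inv_pos.2 hKpos))
  set A := N + 1 with hA
  have hup : ∑ n ∈ Finset.range (K * A), convPow μ n (Ico (-(A : ℝ)) A) ≤ 2 * A * U :=
    (potential_big_le μ A (K * A)).trans (mul_le_mul_right (ENNReal.sum_le_tsum _) _)
  have hlow : ∑ n ∈ Finset.Ico N (K * A), (1 / 2 : ℝ≥0∞)
      ≤ ∑ n ∈ Finset.range (K * A), convPow μ n (Ico (-(A : ℝ)) A) := by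
    refine le_trans (Finset.sum_le_sum fun n hn => ?_)
      (Finset.sum_le_sum_of_subset (s := Finset.Ico N (K * A)) fun n hn => by
        simp at hn ⊢; exact hn.2)
    obtain ⟨h1, h2⟩ := Finset.mem_Ico.1 hn
    refine (hN n h1).trans (measure_mono fun y hy => ?_)
    have hlt : (K : ℝ)⁻¹ * n < A := by
      rw [inv_mul_lt_iff₀ hKpos]; exact_mod_cast h2
    obtain ⟨h3, h4⟩ := abs_lt.1 (lt_trans hy hlt)
    exact ⟨h3.le, h4⟩
  have hfin := hlow.trans hup
  rw [Finset.sum_const, Nat.card_Ico, nsmul_eq_mul] at hfin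
  have hR := ENNReal.toReal_mono (ENNReal.mul_ne_top (ENNReal.mul_ne_top (by simp) (by simp)) hne)
    hfin
  simp only [ENNReal.toReal_mul, ENNReal.toReal_natCast, ENNReal.toReal_div, ENNReal.toReal_one,
    ENNReal.toReal_ofNat] at hR
  have hsub : (K : ℝ) * A - N ≤ ((K * A - N : ℕ) : ℝ) := by
    have : K * A ≤ (K * A - N) + N := by lia
    have h' : (K : ℝ) * A ≤ ((K * A - N : ℕ) : ℝ) + N := by exact_mod_cast this
    linarith
  have hAr : (A : ℝ) = N + 1 := by simp [hA]
  have hApos : (0 : ℝ) < A := by rw [hAr]; positivity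
  nlinarith [mul_lt_mul_of_pos_right hK hApos]

/-- Beyond some radius `R` the tail condition bounds `f` below by a positive constant on each
bounded region, and bounds `|y| f(y)` above by a multiple of `|y| ^ (-a)`. The normalisation
`1 ≤ R` keeps `|y|` comparable to `1 + |y|` there. -/
lemma exists_lower_bound {f : ℝ → ℝ} {a c : ℝ} (ha : 1 < a) (hc : 0 < c)
    (htail : Tendsto (fun y => f y * |y| ^ (a + 1) / c) (cocompact ℝ) (nhds 1)) :
    ∃ R : ℝ, 1 ≤ R ∧ (∀ S, ∃ δ > (0 : ℝ), ∀ y, R ≤ |y| → |y| ≤ S → δ ≤ f y) ∧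
      ∀ y, R ≤ |y| → |y| * f y ≤ 2 * c * |y| ^ (-a) := by
  have hev := htail.eventually (Icc_mem_nhds (show (1 / 2 : ℝ) < 1 by norm_num)
    (show (1 : ℝ) < 2 by norm_num))
  rw [← Metric.cobounded_eq_cocompact, ← comap_norm_atTop, eventually_comap] at hev
  obtain ⟨R, hR⟩ := eventually_atTop.1 hev
  refine ⟨max R 1, le_max_right _ _, fun S => ?_, fun y hy => ?_⟩
  · refine ⟨c / 2 * (max S 1) ^ (-(a + 1)), by positivity, fun y hy hyS => ?_⟩
    have hy1 : 0 < |y| := lt_of_lt_of_le one_pos ((le_max_right _ _).trans hy)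
    obtain ⟨h1, -⟩ := hR |y| ((le_max_left _ _).trans hy) y rfl
    rw [le_div_iff₀ hc] at h1
    have hp : 0 < |y| ^ (a + 1) := by positivity
    have h2 : (max S 1) ^ (-(a + 1)) ≤ |y| ^ (-(a + 1)) :=
      Real.rpow_le_rpow_of_nonpos hy1 (hyS.trans (le_max_left _ _)) (by linarith)
    calc c / 2 * (max S 1) ^ (-(a + 1)) ≤ c / 2 * |y| ^ (-(a + 1)) := by gcongr
      _ = (1 / 2 * c) / |y| ^ (a + 1) := by rw [Real.rpow_neg hy1.le]; ring
      _ ≤ f y := by rw [div_le_iff₀ hp]; exact h1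
  · have hy1 : 0 < |y| := lt_of_lt_of_le one_pos ((le_max_right _ _).trans hy)
    obtain ⟨-, h1⟩ := hR |y| ((le_max_left _ _).trans hy) y rfl
    rw [div_le_iff₀ hc] at h1
    have hp : 0 < |y| ^ a := by positivity
    rw [Real.rpow_add_one hy1.ne'] at h1
    rw [Real.rpow_neg hy1.le, ← div_eq_mul_inv, le_div_iff₀ hp]
    linarith

/-- Two steps have a density bounded below on compact sets: a first step into `[M, M + 1]` with
`M` large leaves a second step which is large too. -/
lemma two_step_lower {f : ℝ → ℝ} {R : ℝ} (hR : 0 < R) [IsProbabilityMeasure (jumpLaw f)]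
    (hf : ∀ S, ∃ δ > (0 : ℝ), ∀ y, R ≤ |y| → |y| ≤ S → δ ≤ f y) {K : ℝ} (hK : 0 ≤ K) :
    ∃ δ : ℝ≥0∞, δ ≠ 0 ∧ ∀ B, MeasurableSet B → B ⊆ Icc (-K) K →
      δ * volume B ≤ (jumpLaw f ∗ jumpLaw f) B := by
  obtain ⟨δ, hδ, h⟩ := hf (2 * K + R + 1)
  have hlow : ∀ C, MeasurableSet C → (∀ y ∈ C, R ≤ |y| ∧ |y| ≤ 2 * K + R + 1) →
      ENNReal.ofReal δ * volume C ≤ jumpLaw f C := by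
    intro C hC hCs
    rw [jumpLaw, withDensity_apply _ hC, ← setLIntegral_const]
    exact setLIntegral_mono' hC fun y hy =>
      ENNReal.ofReal_le_ofReal (h y (hCs y hy).1 (hCs y hy).2)
  refine ⟨ENNReal.ofReal δ * ENNReal.ofReal δ, by simp [hδ], fun B hB hBK => ?_⟩
  rw [conv_apply_eq _ _ hB]
  have hI : ENNReal.ofReal δ ≤ jumpLaw f (Icc (K + R) (K + R + 1)) := by
    have := hlow (Icc (K + R) (K + R + 1)) measurableSet_Icc fun y hy => by
      rw [abs_of_nonneg (by linarith [hy.1])]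
      constructor <;> linarith [hy.1, hy.2]
    simpa using this
  calc ENNReal.ofReal δ * ENNReal.ofReal δ * volume B
      = (ENNReal.ofReal δ * volume B) * ENNReal.ofReal δ := by ring
    _ ≤ (ENNReal.ofReal δ * volume B) * jumpLaw f (Icc (K + R) (K + R + 1)) := by gcongr
    _ = ∫⁻ _ in Icc (K + R) (K + R + 1), ENNReal.ofReal δ * volume B ∂(jumpLaw f) := by
        rw [setLIntegral_const]
    _ ≤ ∫⁻ y in Icc (K + R) (K + R + 1), jumpLaw f {z | y + z ∈ B} ∂(jumpLaw f) := by
        refine setLIntegral_mono' measurableSet_Icc fun y hy => ?_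
        have hv : volume {z | y + z ∈ B} = volume B := measure_preimage_add volume y B
        rw [← hv]
        refine hlow _ (measurable_const_add y hB) fun z hz => ?_
        have hz' := hBK hz
        rw [abs_of_nonpos (by linarith [hz'.2, hy.1])]
        constructor <;> linarith [hz'.1, hz'.2, hy.1, hy.2]
    _ ≤ _ := setLIntegral_le_lintegral _ _

lemma integrable_mul_density {f : ℝ → ℝ} {a c R : ℝ} (ha : 1 < a) (hc : 0 < c) (hR : 1 ≤ R)
    (hmeas : Measurable f) (hnn : ∀ y, 0 ≤ f y) (hint : (∫ y, f y) = 1)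
    (h : ∀ y, R ≤ |y| → |y| * f y ≤ 2 * c * |y| ^ (-a)) : Integrable fun y => y * f y := by
  have hi : Integrable f := by
    by_contra h
    rw [integral_undef h] at hint
    exact zero_ne_one hint
  have hJ : Integrable fun y : ℝ => (1 + ‖y‖) ^ (-a) :=
    integrable_one_add_norm (by simpa using ha)
  refine ((hi.const_mul R).add (hJ.const_mul (2 * c / 2 ^ (-a)))).mono'
    (measurable_id.mul hmeas).aestronglyMeasurable (Eventually.of_forall fun y => ?_)
  have hp : 0 ≤ 2 * c / 2 ^ (-a) * (1 + ‖y‖) ^ (-a) := by positivity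
  simp only [Pi.add_apply, norm_mul, Real.norm_eq_abs, abs_of_nonneg (hnn y)] at hp ⊢
  rcases le_total |y| R with hy | hy
  · have := mul_le_mul_of_nonneg_right hy (hnn y)
    linarith
  · have h1 : |y| ^ (-a) ≤ ((1 + |y|) / 2) ^ (-a) :=
      Real.rpow_le_rpow_of_nonpos (by positivity) (by linarith) (by linarith)
    rw [Real.div_rpow (by positivity) (by norm_num)] at h1
    have h2 : 0 ≤ R * f y := mul_nonneg (by linarith) (hnn y)
    calc |y| * f y ≤ 2 * c * |y| ^ (-a) := h y hy
      _ ≤ 2 * c * ((1 + |y|) ^ (-a) / 2 ^ (-a)) := by gcongr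
      _ = 2 * c / 2 ^ (-a) * (1 + |y|) ^ (-a) := by ring
      _ ≤ _ := by linarith

/-- Infinitely many expected visits to `(-1, 1)` yield infinitely many expected visits to every
bounded non-null set, since from `(-1, 1)` two further steps reach it with probability bounded
below. -/
lemma potential_eq_top {f : ℝ → ℝ} {R : ℝ} (hR : 0 < R) [IsProbabilityMeasure (jumpLaw f)]
    (hf : ∀ S, ∃ δ > (0 : ℝ), ∀ y, R ≤ |y| → |y| ≤ S → δ ≤ f y)
    (hU : ∑' n, convPow (jumpLaw f) n (Ioo (-1) 1) = ⊤) {K : ℝ} (hK : 0 ≤ K) {B : Set ℝ}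
    (hB : MeasurableSet B) (hBK : B ⊆ Icc (-K) K) (hvol : volume B ≠ 0) :
    ∑' n, convPow (jumpLaw f) n B = ⊤ := by
  obtain ⟨δ, hδ, h⟩ := two_step_lower hR hf (K := K + 1) (by linarith)
  have hstep : ∀ n, δ * volume B * convPow (jumpLaw f) n (Ioo (-1) 1)
      ≤ convPow (jumpLaw f) (n + 2) B := by
    intro n
    have hassoc : convPow (jumpLaw f) (n + 2)
        = convPow (jumpLaw f) n ∗ (jumpLaw f ∗ jumpLaw f) := by
      rw [convPow, convPow, ← Measure.conv_assoc, Measure.conv_comm]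
    rw [hassoc, conv_apply_eq _ _ hB]
    calc δ * volume B * convPow (jumpLaw f) n (Ioo (-1) 1)
        = ∫⁻ _ in Ioo (-1) 1, δ * volume B ∂(convPow (jumpLaw f) n) := by
          rw [setLIntegral_const]
      _ ≤ ∫⁻ y in Ioo (-1) 1, (jumpLaw f ∗ jumpLaw f) {z | y + z ∈ B}
            ∂(convPow (jumpLaw f) n) := by
          refine setLIntegral_mono' measurableSet_Ioo fun y hy => ?_
          have hv : volume {z | y + z ∈ B} = volume B := measure_preimage_add volume y B
          rw [← hv]
          refine h _ (measurable_const_add y hB) fun z hz => ?_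
          have hz' := hBK hz
          constructor <;> linarith [hz'.1, hz'.2, hy.1, hy.2]
      _ ≤ _ := setLIntegral_le_lintegral _ _
  refine top_le_iff.1 ?_
  calc (⊤ : ℝ≥0∞) = δ * volume B * ∑' n, convPow (jumpLaw f) n (Ioo (-1) 1) := by
        rw [hU, ENNReal.mul_top (mul_ne_zero hδ hvol)]
    _ = ∑' n, δ * volume B * convPow (jumpLaw f) n (Ioo (-1) 1) := ENNReal.tsum_mul_left.symm
    _ ≤ ∑' n, convPow (jumpLaw f) (n + 2) B := ENNReal.tsum_le_tsum hstep
    _ ≤ ∑' n, convPow (jumpLaw f) n B :=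
        ENNReal.tsum_comp_le_tsum_of_injective (add_left_injective 2) _

/-- Corollary: a random walk whose jump density has power-law tails with exponent
`α + 1`, `α ∈ (1,2)`, and zero mean is recurrent. -/
theorem recurrence_of_heavy_tailed_random_walk
    (f : ℝ → ℝ) (a c : ℝ)
    (ha : a ∈ Set.Ioo (1 : ℝ) 2) (hc : 0 < c)
    (hmeas : Measurable f) (hnn : ∀ y, 0 ≤ f y) (hint : (∫ y, f y) = 1)
    (htail : Filter.Tendsto (fun y => f y * |y| ^ (a + 1) / c) (cocompact ℝ) (nhds 1))
    (hmean : (∫ y, y * f y) = 0) :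
    IsRecurrentChain (fun _ => f) := by
  have := jumpLaw_prob hnn hint
  obtain ⟨R, hR1, hlow, hup⟩ := exists_lower_bound ha.1 hc htail
  have hR : 0 < R := by linarith
  have hiy := integrable_mul_density ha.1 hc hR1 hmeas hnn hint hup
  have hfin : ∀ᵐ y : ℝ, ENNReal.ofReal (f y) < ⊤ := Eventually.of_forall fun y => by simp
  have hid : Integrable id (jumpLaw f) := by
    rw [jumpLaw, integrable_withDensity_iff hmeas.ennreal_ofReal hfin]
    simpa [ENNReal.toReal_ofReal (hnn _)] using hiy
  have h0 : ∫ y, y ∂(jumpLaw f) = 0 := by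
    rw [jumpLaw, integral_withDensity_eq_integral_toReal_smul hmeas.ennreal_ofReal hfin, ← hmean]
    refine integral_congr_ae (Eventually.of_forall fun y => ?_)
    simp [ENNReal.toReal_ofReal (hnn y), mul_comm]
  have hU := potential_unit_eq_top (jumpLaw f) hid h0
  have hrec : ∀ x : ℝ, ∀ B : Set ℝ, MeasurableSet B → 0 < volume.restrict (Icc (0 : ℝ) 1) B →
      (∑' n : ℕ, nStep (fun _ => f) n x B) = ⊤ := by
    intro x B hB hpos
    rw [Measure.restrict_apply hB] at hpos
    have hB' : MeasurableSet (B ∩ Icc (0 : ℝ) 1) := hB.inter measurableSet_Icc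
    have hv : volume {z | x + z ∈ B ∩ Icc (0 : ℝ) 1} = volume (B ∩ Icc (0 : ℝ) 1) :=
      measure_preimage_add volume x _
    have htop := potential_eq_top hR hlow hU (K := |x| + 1) (by positivity)
      (B := {z | x + z ∈ B ∩ Icc (0 : ℝ) 1}) (measurable_const_add x hB')
      (fun z hz => by
        obtain ⟨-, h1, h2⟩ := hz
        constructor <;> linarith [neg_abs_le x, le_abs_self x])
      (by rw [hv]; exact hpos.ne')
    refine top_le_iff.1 (htop.symm.trans_le (ENNReal.tsum_le_tsum fun n => ?_))
    rw [nStep_eq f n x, Measure.map_apply (measurable_const_add x) hB]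
    exact measure_mono fun z hz => hz.1
  refine ⟨volume.restrict (Icc (0 : ℝ) 1), ⟨by simp⟩, fun x B hB hpos => ?_, hrec⟩
  -- The term `n = 0` is at most `1`, so an infinite sum has a positive term with `n ≥ 1`.
  by_contra! hzero
  have hsum := hrec x B hB hpos
  rw [tsum_eq_single 0 fun n hn => le_antisymm (hzero n (Nat.one_le_iff_ne_zero.2 hn)) zero_le]
    at hsum
  exact (prob_le_one (μ := Measure.dirac x) (s := B)).not_gt (hsum ▸ ENNReal.one_lt_top)
end

section
/- Let α: ℝ → (0,2) and c: ℝ → (0,∞) be functions and let {f_x : x ∈ ℝ} be a family of probability density functions on ℝ. If condition (C3) holds with constant k > 0, i.e. lim_{|y|→∞} sup_{x ∉ [−k,k]} |f_x(y)·|y|^{α(x)+1}/c(x) − 1| = 0, then sup_{x ∉ [−k,k]} c(x) < ∞. -/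
/-!
Take `ε = 1/2` in (C3) and fix a threshold `T ≥ 1` beyond which the approximation holds. On the unit
interval `[T, T + 1]` this gives `f_x(y) ≥ (c(x)/2) y^{-α(x)-1} ≥ (c(x)/2) (T + 1)^{-3}`, uniformly
in `x ∉ [-k,k]`, because `α(x) < 2` and `y ≥ 1`. Since `f_x` has total mass `1`, integrating over
this interval yields `c(x) ≤ 2 (T + 1)^3`.
-/

open MeasureTheory Filter Topology Set
open scoped ENNReal

/-- Remark 1.1: condition (C3) implies `sup_{x ∉ [-k,k]} c(x) < ∞`. -/
theorem sup_c_lt_top_of_condC3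
    (a c : ℝ → ℝ) (f : ℝ → ℝ → ℝ) (k : ℝ)
    (ha : ∀ x, a x ∈ Set.Ioo (0 : ℝ) 2) (hc : ∀ x, 0 < c x)
    (hf : IsDensityFamily f)
    (h3 : CondC3 a c f k) :
    ∃ M : ℝ, ∀ x ∉ Set.Icc (-k) k, c x ≤ M := by 
  obtain ⟨-, h3⟩ := h3
  obtain ⟨R, hR⟩ := h3 (1 / 2) (by norm_num)
  set T : ℝ := max R 1 with hT
  have hT1 : 1 ≤ T := le_max_right _ _
  have hTR : R ≤ T := le_max_left _ _
  refine ⟨2 * (T + 1) ^ 3, fun x hx => ?_⟩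
  obtain ⟨-, hnn, hint⟩ := hf x
  -- A non-integrable function would have Bochner integral `0`, not `1`.
  have hi : Integrable (f x) := by
    by_contra h
    rw [integral_undef h] at hint
    exact zero_ne_one hint
  have hP : 0 < (T + 1) ^ 3 := by positivity
  have hcx := hc x
  have hlow : ∀ y ∈ Icc T (T + 1), c x / (2 * (T + 1) ^ 3) ≤ f x y := by
    intro y hy
    have hy1 : 1 ≤ y := hT1.trans hy.1
    have habs : |y| = y := abs_of_nonneg (by linarith)
    have h := hR y (by rw [habs]; exact hTR.trans hy.1) x hx
    rw [habs] at h
    have hhalf : c x / 2 ≤ f x y * y ^ (a x + 1) := by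
      have h1 : 1 / 2 < f x y * y ^ (a x + 1) / c x := by linarith [(abs_lt.1 h).1]
      rw [lt_div_iff₀ hcx] at h1
      linarith
    have hpow : y ^ (a x + 1) ≤ (T + 1) ^ 3 := by
      calc y ^ (a x + 1) ≤ y ^ (3 : ℝ) :=
            Real.rpow_le_rpow_of_exponent_le hy1 (by linarith [(ha x).2])
        _ = y ^ 3 := by exact_mod_cast Real.rpow_natCast y 3
        _ ≤ (T + 1) ^ 3 := pow_le_pow_left₀ (by linarith) hy.2 3
    rw [div_le_iff₀ (by positivity)]
    have := mul_le_mul_of_nonneg_left hpow (hnn y)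
    linarith
  have hset : c x / (2 * (T + 1) ^ 3) ≤ ∫ y in Icc T (T + 1), f x y := by
    have h := setIntegral_mono_on
      (integrableOn_const (μ := volume) (s := Icc T (T + 1)) (C := c x / (2 * (T + 1) ^ 3))
        (by simp)) hi.integrableOn measurableSet_Icc hlow
    simpa [Measure.real] using h
  have hone : ∫ y in Icc T (T + 1), f x y ≤ 1 :=
    hint ▸ setIntegral_le_integral hi (Eventually.of_forall hnn)
  have := hset.trans hone
  rwa [div_le_one (by positivity)] at this
end

section
/- Let a > 0 be an arbitrary real number. Then ∫₁^∞ dy/(y^a·(1+y)) = (1/2)·(Ψ((a+1)/2) − Ψ(a/2)), where Ψ denotes the digamma function. -/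
/-!
Let `F a` be the integral and `G a = (Ψ((a + 1) / 2) - Ψ(a / 2)) / 2`. Both are nonnegative for
`a > 0` (for `G` because `Ψ`, the derivative of the convex `log Γ`, is increasing) and both satisfy
`u a + u (a + 1) = 1 / a`: for `F` this is `∫₁^∞ y ^ (-a - 1) dy = 1 / a`, for `G` it is the
recurrence `Ψ(x + 1) = Ψ(x) + 1 / x` at `x = a / 2`. Nonnegativity and this equation give
`0 ≤ u a ≤ 1 / a`, and `F - G` only changes sign under `a ↦ a + 1`, so
`|F a - G a| = |F (a + n) - G (a + n)| ≤ 1 / (a + n)` for every `n`, whence `F a = G a`.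
-/

open MeasureTheory Filter Topology Set
open scoped ENNReal

/-- A nonnegative solution on `(0, ∞)` of the functional equation `u a + u (a + 1) = 1 / a`
is unique. -/
theorem eq_of_add_succ_eq_one_div {u v : ℝ → ℝ}
    (hu0 : ∀ a, 0 < a → 0 ≤ u a) (hv0 : ∀ a, 0 < a → 0 ≤ v a)
    (hu : ∀ a, 0 < a → u a + u (a + 1) = 1 / a) (hv : ∀ a, 0 < a → v a + v (a + 1) = 1 / a)
    {a : ℝ} (ha : 0 < a) : u a = v a := by
  have bound : ∀ b, 0 < b → |u b - v b| ≤ 1 / b := by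
    intro b hb
    have h1 := hu0 b hb
    have h2 := hv0 b hb
    have h3 := hu0 (b + 1) (by linarith)
    have h4 := hv0 (b + 1) (by linarith)
    have h5 := hu b hb
    have h6 := hv b hb
    rw [abs_le]
    constructor <;> linarith
  have shift : ∀ n : ℕ, |u a - v a| = |u (a + n) - v (a + n)| := by
    intro n
    induction n with
    | zero => simp
    | succ n ih =>
      have hb : 0 < a + n := by positivity
      have h5 := hu _ hb
      have h6 := hv _ hb
      rw [ih, ← abs_neg]
      push_cast
      rw [← add_assoc]
      congr 1
      linarith
  have lim : Tendsto (fun n : ℕ => 1 / (a + n)) atTop (𝓝 0) :=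
    (tendsto_const_nhds (x := (1 : ℝ))).div_atTop
      (tendsto_atTop_add_const_left _ a tendsto_natCast_atTop_atTop)
  have h0 : |u a - v a| ≤ 0 :=
    ge_of_tendsto' lim fun n => (shift n).trans_le (bound _ (by positivity))
  exact sub_eq_zero.mp (abs_nonpos_iff.mp h0)

theorem differentiableAt_Gamma_of_pos {x : ℝ} (hx : 0 < x) :
    DifferentiableAt ℝ Real.Gamma x :=
  Real.differentiableAt_Gamma fun m => by
    have : (0 : ℝ) ≤ m := m.cast_nonneg
    linarith

theorem digammaFn_add_one {x : ℝ} (hx : 0 < x) :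
    digammaFn (x + 1) = digammaFn x + 1 / x := by
  have hG := (Real.Gamma_pos_of_pos hx).ne'
  have hd : deriv Real.Gamma (x + 1) = Real.Gamma x + x * deriv Real.Gamma x := by
    rw [← deriv_comp_add_const]
    have he : (fun y => Real.Gamma (y + 1)) =ᶠ[𝓝 x] fun y => y * Real.Gamma y := by
      filter_upwards [lt_mem_nhds hx] with y hy using Real.Gamma_add_one hy.ne'
    rw [he.deriv_eq]
    simpa using
      ((hasDerivAt_id' x).fun_mul (differentiableAt_Gamma_of_pos hx).hasDerivAt).deriv
  rw [digammaFn, digammaFn, hd, Real.Gamma_add_one hx.ne']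
  field_simp
  ring

/-- The digamma function is increasing on `(0, ∞)`, being the derivative of the convex function
`log ∘ Γ`. -/
theorem digammaFn_monotoneOn : MonotoneOn digammaFn (Ioi 0) := by
  have hd : ∀ x ∈ Ioi (0 : ℝ), HasDerivAt (Real.log ∘ Real.Gamma) (digammaFn x) x :=
    fun x hx => (differentiableAt_Gamma_of_pos hx).hasDerivAt.log (Real.Gamma_pos_of_pos hx).ne'
  exact (Real.convexOn_log_Gamma.monotoneOn_deriv fun x hx => (hd x hx).differentiableAt).congr
    fun x hx => (hd x hx).deriv

theorem integrableOn_one_div_rpow_mul_one_add {a : ℝ} (ha : 0 < a) :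
    IntegrableOn (fun y : ℝ => 1 / (y ^ a * (1 + y))) (Ioi 1) := by
  refine (integrableOn_Ioi_rpow_of_lt (a := -a - 1) (by linarith) one_pos).mono'
    (Measurable.aestronglyMeasurable (by fun_prop)) ?_
  filter_upwards [ae_restrict_mem measurableSet_Ioi] with y hy
  have hy0 : (0 : ℝ) < y := one_pos.trans hy
  have hp := Real.rpow_pos_of_pos hy0 a
  rw [Real.norm_of_nonneg (by positivity), Real.rpow_sub_one hy0.ne', Real.rpow_neg hy0.le,
    div_eq_mul_inv, div_eq_mul_inv, one_mul, mul_inv]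
  gcongr
  linarith

theorem integral_add_integral_succ {a : ℝ} (ha : 0 < a) :
    (∫ y in Ioi (1 : ℝ), 1 / (y ^ a * (1 + y))) +
      (∫ y in Ioi (1 : ℝ), 1 / (y ^ (a + 1) * (1 + y))) = 1 / a := by
  rw [← integral_add (integrableOn_one_div_rpow_mul_one_add ha)
    (integrableOn_one_div_rpow_mul_one_add (by linarith))]
  have h : ∀ y ∈ Ioi (1 : ℝ),
      1 / (y ^ a * (1 + y)) + 1 / (y ^ (a + 1) * (1 + y)) = y ^ (-a - 1) := by
    intro y hy
    have hy0 : (0 : ℝ) < y := one_pos.trans hy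
    have hp := Real.rpow_pos_of_pos hy0 a
    rw [Real.rpow_sub_one hy0.ne', Real.rpow_neg hy0.le, Real.rpow_add_one hy0.ne']
    field_simp
    ring
  rw [setIntegral_congr_fun measurableSet_Ioi h,
    integral_Ioi_rpow_of_lt (by linarith) one_pos, Real.one_rpow]
  rw [sub_add_cancel, neg_div_neg_eq]

/-- Lemma 3.1: `∫₁^∞ dy/(y^a (1+y)) = (Ψ((a+1)/2) - Ψ(a/2))/2` for `a > 0`. -/
theorem integral_one_div_rpow_mul_one_add (a : ℝ) (ha : 0 < a) :
    (∫ y in Set.Ioi (1 : ℝ), 1 / (y ^ a * (1 + y))) =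
      (1 / 2) * (digammaFn ((a + 1) / 2) - digammaFn (a / 2)) := by
  refine eq_of_add_succ_eq_one_div
    (u := fun a => ∫ y in Ioi (1 : ℝ), 1 / (y ^ a * (1 + y)))
    (v := fun a => (1 / 2) * (digammaFn ((a + 1) / 2) - digammaFn (a / 2)))
    (fun b _ => ?_) (fun b hb => ?_) (fun b hb => integral_add_integral_succ hb)
    (fun b hb => ?_) ha
  · refine setIntegral_nonneg measurableSet_Ioi fun y hy => ?_
    have hy0 : (0 : ℝ) < y := one_pos.trans hy
    positivity
  · have h := digammaFn_monotoneOn (a := b / 2) (b := (b + 1) / 2)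
      (mem_Ioi.2 (by linarith)) (mem_Ioi.2 (by linarith)) (by linarith)
    linarith
  · have h := digammaFn_add_one (half_pos hb)
    have e : (b + 1 + 1) / 2 = b / 2 + 1 := by ring
    rw [e, h]
    field_simp
    ring
end

section
/- Fix β ∈ (0,1). The function y ↦ T(y,β) is strictly decreasing on [0, 1−β), with T(0,β) = 2 and T(1−β,β) = 0 (the latter as the limiting value as y → (1−β)⁻); consequently T(α,β) > 0 for every α ∈ [0, 1−β). -/
/-!
The proof rests on a closed product formula. Euler's reflection formula turns the three summands
of `T(y, b)` into multiples of `Γ(y + b) / (Γ(y) Γ(b))`, the trigonometric coefficients collapse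
by `sin 2(A + B) + sin 2B - sin 2A = 4 cos (A + B) sin B cos A`, and Legendre's duplication formula
(with reflection once more) yields
`T(y, b) = 2 √π Γ((1-b)/2) / Γ(b/2) * Γ((y+b)/2) Γ(1-y/2) / (Γ((y+1)/2) Γ((1-y-b)/2))`
(`Tconst_eq_prod`).

Grouped as `Γ((y+b)/2) / Γ((y+1)/2)` times `Γ(1-y/2) / Γ((1-y-b)/2)`, both factors are positive and
strictly decreasing in `y`, because `x ↦ Γ(x+h) / Γ(x)` is strictly increasing for `h > 0`
(`Gamma_ratio_lt`), a consequence of log-convexity. As `y → 1 - b`, the argument of the last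
Gamma function tends to its pole at `0`, so `T(y, b) → 0`.
-/

open MeasureTheory Filter Topology Set
open scoped ENNReal

/-- For `h > 0` the ratio `Γ(x+h) / Γ(x)` is nondecreasing in `x > 0`, by log-convexity. -/
lemma Gamma_ratio_le {x y h : ℝ} (hx : 0 < x) (hxy : x < y) (hh : 0 < h) :
    Real.Gamma (x + h) * Real.Gamma y ≤ Real.Gamma (y + h) * Real.Gamma x := by
  have hd : 0 < y - x + h := by linarith
  have hconv := Real.convexOn_log_Gamma
  have hxm : x ∈ Set.Ioi (0 : ℝ) := hx
  have hym : y + h ∈ Set.Ioi (0 : ℝ) := by simp only [Set.mem_Ioi]; linarith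
  -- `x + h` and `y` are convex combinations of `x` and `y + h` with complementary weights
  have hw : (y - x) / (y - x + h) + h / (y - x + h) = 1 := by field_simp
  have hw1 : 0 ≤ (y - x) / (y - x + h) := div_nonneg (by linarith) hd.le
  have hw2 : 0 ≤ h / (y - x + h) := by positivity
  have h1 := hconv.2 hxm hym hw1 hw2 hw
  have h2 := hconv.2 hxm hym hw2 hw1 (by rw [add_comm]; exact hw)
  have e1 : (y - x) / (y - x + h) * x + h / (y - x + h) * (y + h) = x + h := by
    field_simp; ring
  have e2 : h / (y - x + h) * x + (y - x) / (y - x + h) * (y + h) = y := by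
    field_simp; ring
  simp only [smul_eq_mul, Function.comp_apply, e1, e2] at h1 h2
  have g1 := Real.Gamma_pos_of_pos hx
  have g2 := Real.Gamma_pos_of_pos (show 0 < x + h by linarith)
  have g3 := Real.Gamma_pos_of_pos (show 0 < y by linarith)
  have g4 := Real.Gamma_pos_of_pos (show 0 < y + h by linarith)
  rw [← Real.log_le_log_iff (by positivity) (by positivity), Real.log_mul g2.ne' g3.ne',
    Real.log_mul g4.ne' g1.ne']
  linear_combination h1 + h2 +
    (Real.log (Real.Gamma x) + Real.log (Real.Gamma (y + h))) * hw

/-- The strict form follows from the weak one at `x + 1`, `y + 1` through `Γ(x+1) = x Γ(x)`,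
since `(x+h)/x` is strictly decreasing in `x`. -/
lemma Gamma_ratio_lt {x y h : ℝ} (hx : 0 < x) (hxy : x < y) (hh : 0 < h) :
    Real.Gamma (x + h) * Real.Gamma y < Real.Gamma (y + h) * Real.Gamma x := by
  have hy : 0 < y := by linarith
  have hw := Gamma_ratio_le (x := x + 1) (y := y + 1) (by linarith) (by linarith) hh
  rw [show x + 1 + h = (x + h) + 1 by ring, show y + 1 + h = (y + h) + 1 by ring,
    Real.Gamma_add_one (by linarith), Real.Gamma_add_one hy.ne',
    Real.Gamma_add_one (by linarith), Real.Gamma_add_one hx.ne'] at hw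
  have g2 := Real.Gamma_pos_of_pos (show 0 < x + h by linarith)
  have g3 := Real.Gamma_pos_of_pos hy
  by_contra! hcon
  have hP := mul_pos g2 g3
  have c1 : (y + h) * x < (x + h) * y := by nlinarith
  have c2 : 0 < (y + h) * x := by positivity
  nlinarith [mul_le_mul_of_nonneg_left hcon c2.le, mul_lt_mul_of_pos_right c1 hP]

lemma Tconst_zero {b : ℝ} (hb0 : 0 < b) (hb1 : b < 1) : Tconst 0 b = 2 := by
  have h1 := Real.Gamma_pos_of_pos (show 0 < 1 - b by linarith)
  have h2 := Real.Gamma_pos_of_pos hb0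
  simp only [Tconst, sub_zero, Real.Gamma_one, zero_add, zero_mul, add_comm 1 b,
    Real.Gamma_add_one hb0.ne']
  field_simp
  norm_num

/-- The closed trigonometric form of `T`, obtained from the reflection formula. -/
lemma Tconst_eq_trig {b y : ℝ} (hb0 : 0 < b) (hb1 : b < 1) (hy0 : 0 < y) (hy1 : y < 1 - b) :
    Tconst y b = Real.pi * Real.Gamma (y + b) / (Real.Gamma y * Real.Gamma b) *
      (Real.cos (Real.pi * (y / 2 + b / 2)) /
        (Real.sin (Real.pi * (y / 2)) * Real.cos (Real.pi * (b / 2)))) := by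
  have hpi := Real.pi_pos
  have gy := Real.Gamma_pos_of_pos hy0
  have gb := Real.Gamma_pos_of_pos hb0
  have gyb := Real.Gamma_pos_of_pos (show 0 < y + b by linarith)
  have gyb' := Real.Gamma_pos_of_pos (show 0 < 1 - (y + b) by linarith)
  have r1 := Real.Gamma_mul_Gamma_one_sub y
  have r2 := Real.Gamma_mul_Gamma_one_sub b
  have r3 := Real.Gamma_mul_Gamma_one_sub (y + b)
  have sA : 0 < Real.sin (Real.pi * (y / 2)) :=
    Real.sin_pos_of_pos_of_lt_pi (by positivity) (by nlinarith)
  have sB : 0 < Real.sin (Real.pi * (b / 2)) :=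
    Real.sin_pos_of_pos_of_lt_pi (by positivity) (by nlinarith)
  have cA : 0 < Real.cos (Real.pi * (y / 2)) :=
    Real.cos_pos_of_mem_Ioo ⟨by nlinarith, by nlinarith⟩
  have cB : 0 < Real.cos (Real.pi * (b / 2)) :=
    Real.cos_pos_of_mem_Ioo ⟨by nlinarith, by nlinarith⟩
  have sAB : 0 < Real.sin (Real.pi * (y + b)) :=
    Real.sin_pos_of_pos_of_lt_pi (by positivity) (by nlinarith)
  have d1 : Real.sin (Real.pi * y) =
      2 * Real.sin (Real.pi * (y / 2)) * Real.cos (Real.pi * (y / 2)) := by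
    rw [← Real.sin_two_mul]; congr 1; ring
  have d2 : Real.sin (Real.pi * b) =
      2 * Real.sin (Real.pi * (b / 2)) * Real.cos (Real.pi * (b / 2)) := by
    rw [← Real.sin_two_mul]; congr 1; ring
  have d3 : Real.sin (Real.pi * (y + b)) =
      2 * Real.sin (Real.pi * (y / 2) + Real.pi * (b / 2)) *
        Real.cos (Real.pi * (y / 2) + Real.pi * (b / 2)) := by
    rw [← Real.sin_two_mul]; congr 1; ring
  have e1 : Real.Gamma (1 - y) = Real.pi / Real.sin (Real.pi * y) / Real.Gamma y := by
    rw [← r1]; field_simp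
  have e2 : Real.Gamma (1 - b) = Real.pi / Real.sin (Real.pi * b) / Real.Gamma b := by
    rw [← r2]; field_simp
  have e3 : Real.Gamma (1 - y - b) =
      Real.pi / Real.sin (Real.pi * (y + b)) / Real.Gamma (y + b) := by
    rw [← r3, sub_sub]; field_simp
  have trig : Real.sin (Real.pi * (y + b)) + Real.sin (Real.pi * b) - Real.sin (Real.pi * y) =
      4 * Real.cos (Real.pi * (y / 2) + Real.pi * (b / 2)) * Real.sin (Real.pi * (b / 2)) *
        Real.cos (Real.pi * (y / 2)) := by
    rw [d1, d2, d3, Real.sin_add, Real.cos_add]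
    have p1 := Real.sin_sq_add_cos_sq (Real.pi * (y / 2))
    have p2 := Real.sin_sq_add_cos_sq (Real.pi * (b / 2))
    generalize Real.sin (Real.pi * (y / 2)) = s at *
    generalize Real.cos (Real.pi * (y / 2)) = c at *
    generalize Real.sin (Real.pi * (b / 2)) = s' at *
    generalize Real.cos (Real.pi * (b / 2)) = c' at *
    linear_combination (-2 * s' * c') * p1 + (2 * s * c) * p2
  have s1 : 0 < Real.sin (Real.pi * y) := by rw [d1]; positivity
  have s2 : 0 < Real.sin (Real.pi * b) := by rw [d2]; positivity
  have main : Tconst y b = Real.pi * Real.Gamma (y + b) / (Real.Gamma y * Real.Gamma b) *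
      ((Real.sin (Real.pi * (y + b)) + Real.sin (Real.pi * b) - Real.sin (Real.pi * y)) /
        (Real.sin (Real.pi * y) * Real.sin (Real.pi * b))) := by
    rw [Tconst, e3, e1, e2, add_comm 1 b, add_comm 1 y, Real.Gamma_add_one hb0.ne',
      Real.Gamma_add_one hy0.ne']
    field_simp
  rw [main, trig, d1, d2, mul_add]
  generalize Real.sin (Real.pi * (y / 2)) = s at *
  generalize Real.cos (Real.pi * (y / 2)) = c at *
  generalize Real.sin (Real.pi * (b / 2)) = s' at *
  generalize Real.cos (Real.pi * (b / 2)) = c' at *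
  generalize Real.cos (Real.pi * (y / 2) + Real.pi * (b / 2)) = d at *
  field_simp
  ring

/-- The closed form of `T` as a product of Gamma functions. -/
lemma Tconst_eq_prod {b y : ℝ} (hb0 : 0 < b) (hb1 : b < 1) (hy0 : 0 ≤ y) (hy1 : y < 1 - b) :
    Tconst y b = 2 * √Real.pi * Real.Gamma (1 / 2 - b / 2) / Real.Gamma (b / 2) *
      (Real.Gamma (y / 2 + b / 2) / Real.Gamma (y / 2 + 1 / 2)) *
      (Real.Gamma (1 - y / 2) / Real.Gamma (1 / 2 - y / 2 - b / 2)) := by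
  have hsp : 0 < √Real.pi := Real.sqrt_pos.2 Real.pi_pos
  have gw := Real.Gamma_pos_of_pos (show 0 < b / 2 by linarith)
  have gw' := Real.Gamma_pos_of_pos (show 0 < 1 / 2 - b / 2 by linarith)
  rcases hy0.eq_or_lt with rfl | hy0
  · rw [Tconst_zero hb0 hb1]
    simp only [zero_div, zero_add, sub_zero, Real.Gamma_one_half_eq, Real.Gamma_one]
    field_simp
  rw [Tconst_eq_trig hb0 hb1 hy0 hy1]
  obtain ⟨u, rfl⟩ : ∃ u, y = 2 * u := ⟨y / 2, by ring⟩
  obtain ⟨w, rfl⟩ : ∃ w, b = 2 * w := ⟨b / 2, by ring⟩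
  simp only [mul_div_cancel_left₀ _ (two_ne_zero' ℝ)] at *
  have hu : 0 < u := by linarith
  have hw : 0 < w := by linarith
  have q1 := Real.Gamma_pos_of_pos hu
  have q2 := Real.Gamma_pos_of_pos (show 0 < u + 1 / 2 by linarith)
  have q3 := Real.Gamma_pos_of_pos (show 0 < w + 1 / 2 by linarith)
  have q4 := Real.Gamma_pos_of_pos (show 0 < u + w by linarith)
  have q5 := Real.Gamma_pos_of_pos (show 0 < u + w + 1 / 2 by linarith)
  have q6 := Real.Gamma_pos_of_pos (show 0 < 1 / 2 - u - w by linarith)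
  have q7 := Real.Gamma_pos_of_pos (show 0 < 1 - u by linarith)
  have t1 := Real.Gamma_mul_Gamma_add_half u
  have t2 := Real.Gamma_mul_Gamma_add_half w
  have t3 := Real.Gamma_mul_Gamma_add_half (u + w)
  have r1 := Real.Gamma_mul_Gamma_one_sub u
  have r2 := Real.Gamma_mul_Gamma_one_sub (w + 1 / 2)
  have r3 := Real.Gamma_mul_Gamma_one_sub (u + w + 1 / 2)
  rw [show 1 - (w + 1 / 2) = 1 / 2 - w by ring,
    show Real.pi * (w + 1 / 2) = Real.pi * w + Real.pi / 2 by ring, Real.sin_add_pi_div_two] at r2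
  rw [show 1 - (u + w + 1 / 2) = 1 / 2 - u - w by ring,
    show Real.pi * (u + w + 1 / 2) = Real.pi * (u + w) + Real.pi / 2 by ring,
    Real.sin_add_pi_div_two] at r3
  have c1 : Real.sin (Real.pi * u) = Real.pi / (Real.Gamma u * Real.Gamma (1 - u)) := by
    rw [r1, div_div_cancel₀ Real.pi_ne_zero]
  have c2 : Real.cos (Real.pi * w) =
      Real.pi / (Real.Gamma (w + 1 / 2) * Real.Gamma (1 / 2 - w)) := by
    rw [r2, div_div_cancel₀ Real.pi_ne_zero]
  have c3 : Real.cos (Real.pi * (u + w)) =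
      Real.pi / (Real.Gamma (u + w + 1 / 2) * Real.Gamma (1 / 2 - u - w)) := by
    rw [r3, div_div_cancel₀ Real.pi_ne_zero]
  have p0 : (2 : ℝ) ^ (1 - 2 * u) * 2 ^ (1 - 2 * w) = 2 * 2 ^ (1 - 2 * (u + w)) := by
    rw [← Real.rpow_add two_pos, mul_comm 2 ((2 : ℝ) ^ _), ← Real.rpow_add_one two_ne_zero]
    congr 1; ring
  have p1 : 0 < (2 : ℝ) ^ (1 - 2 * u) := Real.rpow_pos_of_pos two_pos _
  have p2 : 0 < (2 : ℝ) ^ (1 - 2 * w) := Real.rpow_pos_of_pos two_pos _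
  have p3 : 0 < (2 : ℝ) ^ (1 - 2 * (u + w)) := Real.rpow_pos_of_pos two_pos _
  have f1 : Real.Gamma (2 * u) = Real.Gamma u * Real.Gamma (u + 1 / 2) /
      (2 ^ (1 - 2 * u) * √Real.pi) := by rw [t1]; field_simp
  have f2 : Real.Gamma (2 * w) = Real.Gamma w * Real.Gamma (w + 1 / 2) /
      (2 ^ (1 - 2 * w) * √Real.pi) := by rw [t2]; field_simp
  have f3 : Real.Gamma (2 * u + 2 * w) = Real.Gamma (u + w) * Real.Gamma (u + w + 1 / 2) /
      (2 ^ (1 - 2 * (u + w)) * √Real.pi) := by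
    rw [t3, ← mul_add]; field_simp
  have hpi := Real.pi_pos
  rw [c1, c2, c3, f1, f2, f3]
  generalize (2 : ℝ) ^ (1 - 2 * u) = A at *
  generalize (2 : ℝ) ^ (1 - 2 * w) = B at *
  generalize (2 : ℝ) ^ (1 - 2 * (u + w)) = C at *
  generalize √Real.pi = S at *
  generalize Real.Gamma (1 / 2 - w) = G at *
  generalize Real.Gamma (1 / 2 - u - w) = H at *
  field_simp
  linear_combination p0

/-- Properties of `α ↦ T(α,β)` for fixed `β ∈ (0,1)`: strictly decreasing on `[0,1-β)`,
`T(0,β) = 2`, `T(α,β) → 0` as `α → (1-β)⁻`, and `T(α,β) > 0` on `[0,1-β)`. -/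
theorem Tconst_properties_in_first_variable (b : ℝ) (hb : b ∈ Set.Ioo (0 : ℝ) 1) :
    StrictAntiOn (fun y => Tconst y b) (Set.Ico 0 (1 - b)) ∧
    Tconst 0 b = 2 ∧
    Filter.Tendsto (fun y => Tconst y b) (nhdsWithin (1 - b) (Set.Iio (1 - b))) (nhds 0) ∧
    ∀ a ∈ Set.Ico (0 : ℝ) (1 - b), 0 < Tconst a b := by 
  obtain ⟨hb0, hb1⟩ := hb
  have gw := Real.Gamma_pos_of_pos (show 0 < b / 2 by linarith)
  have gw' := Real.Gamma_pos_of_pos (show 0 < 1 / 2 - b / 2 by linarith)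
  have hsp : 0 < √Real.pi := Real.sqrt_pos.2 Real.pi_pos
  refine ⟨?_, Tconst_zero hb0 hb1, ?_, ?_⟩
  · rintro y ⟨hy0, hy1⟩ z ⟨hz0, hz1⟩ hyz
    simp only
    rw [Tconst_eq_prod hb0 hb1 hy0 hy1, Tconst_eq_prod hb0 hb1 hz0 hz1]
    have k1 := Gamma_ratio_lt (x := y / 2 + b / 2) (y := z / 2 + b / 2) (h := 1 / 2 - b / 2)
      (by linarith) (by linarith) (by linarith)
    have k2 := Gamma_ratio_lt (x := 1 / 2 - z / 2 - b / 2) (y := 1 / 2 - y / 2 - b / 2)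
      (h := 1 / 2 + b / 2) (by linarith) (by linarith) (by linarith)
    rw [show y / 2 + b / 2 + (1 / 2 - b / 2) = y / 2 + 1 / 2 by ring,
      show z / 2 + b / 2 + (1 / 2 - b / 2) = z / 2 + 1 / 2 by ring] at k1
    rw [show 1 / 2 - z / 2 - b / 2 + (1 / 2 + b / 2) = 1 - z / 2 by ring,
      show 1 / 2 - y / 2 - b / 2 + (1 / 2 + b / 2) = 1 - y / 2 by ring] at k2
    have q1 := Real.Gamma_pos_of_pos (show 0 < z / 2 + b / 2 by linarith)
    have q2 := Real.Gamma_pos_of_pos (show 0 < z / 2 + 1 / 2 by linarith)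
    have q3 := Real.Gamma_pos_of_pos (show 0 < y / 2 + 1 / 2 by linarith)
    have q4 := Real.Gamma_pos_of_pos (show 0 < 1 / 2 - z / 2 - b / 2 by linarith)
    have q5 := Real.Gamma_pos_of_pos (show 0 < 1 / 2 - y / 2 - b / 2 by linarith)
    have q6 := Real.Gamma_pos_of_pos (show 0 < 1 - z / 2 by linarith)
    have q7 := Real.Gamma_pos_of_pos (show 0 < y / 2 + b / 2 by linarith)
    have m1 : Real.Gamma (z / 2 + b / 2) / Real.Gamma (z / 2 + 1 / 2) <
        Real.Gamma (y / 2 + b / 2) / Real.Gamma (y / 2 + 1 / 2) := by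
      rw [div_lt_div_iff₀ q2 q3]; linarith
    have m2 : Real.Gamma (1 - z / 2) / Real.Gamma (1 / 2 - z / 2 - b / 2) <
        Real.Gamma (1 - y / 2) / Real.Gamma (1 / 2 - y / 2 - b / 2) := by
      rw [div_lt_div_iff₀ q4 q5]; linarith
    have hK : 0 < 2 * √Real.pi * Real.Gamma (1 / 2 - b / 2) / Real.Gamma (b / 2) := by positivity
    exact mul_lt_mul'' (mul_lt_mul_of_pos_left m1 hK) m2 (by positivity) (by positivity)
  · have hs0 : (1 / 2 - (1 - b) / 2 - b / 2 : ℝ) = 0 := by ring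
    -- `1 / Γ(s) = s / Γ(s + 1)` removes the singularity at `s = (1 - y - b) / 2 = 0`
    have hcont : ContinuousAt (fun y : ℝ =>
        2 * √Real.pi * Real.Gamma (1 / 2 - b / 2) / Real.Gamma (b / 2) *
        (Real.Gamma (y / 2 + b / 2) / Real.Gamma (y / 2 + 1 / 2)) *
        (Real.Gamma (1 - y / 2) *
          ((1 / 2 - y / 2 - b / 2) / Real.Gamma (1 / 2 - y / 2 - b / 2 + 1)))) (1 - b) := by
      have hG : ∀ g : ℝ → ℝ, Continuous g → 0 < g (1 - b) →
          ContinuousAt (fun y => Real.Gamma (g y)) (1 - b) := fun g hg hpos =>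
        ContinuousAt.comp' (Real.differentiableAt_Gamma (fun m => by
          have : (0 : ℝ) ≤ m := m.cast_nonneg
          linarith)).continuousAt hg.continuousAt
      have n1 := Real.Gamma_pos_of_pos (show 0 < (1 - b) / 2 + 1 / 2 by linarith)
      have n2 := Real.Gamma_pos_of_pos (show 0 < 1 / 2 - (1 - b) / 2 - b / 2 + 1 by linarith)
      refine (continuousAt_const.mul ((hG (fun y => y / 2 + b / 2) (by fun_prop) ?_).div
        (hG (fun y => y / 2 + 1 / 2) (by fun_prop) ?_) n1.ne')).mul
        ((hG (fun y => 1 - y / 2) (by fun_prop) ?_).mul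
          (ContinuousAt.div (by fun_prop)
            (hG (fun y => 1 / 2 - y / 2 - b / 2 + 1) (by fun_prop) ?_) n2.ne')) <;>
      linarith
    have hlim := hcont.tendsto.mono_left (nhdsWithin_le_nhds (s := Set.Iio (1 - b)))
    simp only [hs0, zero_div, mul_zero] at hlim
    refine hlim.congr' ?_
    filter_upwards [Ioo_mem_nhdsLT (show (0 : ℝ) < 1 - b by linarith)] with y hy
    have hs : 1 / 2 - y / 2 - b / 2 ≠ 0 := by linarith [hy.2]
    rw [Tconst_eq_prod hb0 hb1 hy.1.le hy.2, Real.Gamma_add_one hs, ← div_div, div_self hs,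
      mul_one_div]
  · rintro y ⟨hy0, hy1⟩
    rw [Tconst_eq_prod hb0 hb1 hy0 hy1]
    have q1 := Real.Gamma_pos_of_pos (show 0 < y / 2 + b / 2 by linarith)
    have q2 := Real.Gamma_pos_of_pos (show 0 < y / 2 + 1 / 2 by linarith)
    have q3 := Real.Gamma_pos_of_pos (show 0 < 1 - y / 2 by linarith)
    have q4 := Real.Gamma_pos_of_pos (show 0 < 1 / 2 - y / 2 - b / 2 by linarith)
    positivity
end

section
/- Fix α ∈ (0,1). The function β ↦ T(α,β) is strictly positive on (0, 1−α) and vanishes at the endpoints, T(α,0) = 0 and T(α,1−α) = 0 (as limiting values); moreover, the function β ↦ T(α,β)/β is strictly decreasing on (0, 1−α). -/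
/-!
The reflection formula `Γ(s) Γ(1 - s) = π / sin (π s)`, applied at `s = a`, `b` and `a + b`, turns
the three summands of `T(a, b)` into multiples of one product:
`T(a, b) = Γ(a + b) Γ(1 - a) Γ(1 - b) / π * (sin (π (a + b)) + sin (π b) - sin (π a))`.
The trigonometric factor equals `4 sin (π b / 2) cos (π (a + b) / 2) cos (π a / 2)`, and a second
use of reflection at `b` gives, on `0 < b < 1 - a` (`Tconst_eq_mul`),
`T(a, b) = b * 2 Γ(1 - a) cos (π a / 2) * Γ(a + b) / Γ(1 + b) * cos (π (a + b) / 2) / cos (π b / 2)`.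

Positivity is read off from this product. The right-hand side is continuous on `[0, 1 - a]`; it
vanishes at `0` because of the factor `b` and at `1 - a` because `cos (π / 2) = 0`. After division
by `b`, the quotient `Γ(a + b) / Γ(1 + b)` is decreasing because `log Γ` is convex and `a < 1`
(`Gamma_add_mul_Gamma_le`), and the quotient of cosines is strictly decreasing
(`cos_add_mul_cos_lt`).
-/


open MeasureTheory Filter Topology Set
open scoped ENNReal

/-- Log-convexity of `Γ`: the increment of `log Γ` over an interval of length `d` grows as the
interval moves to the right. -/
lemma Gamma_add_mul_Gamma_le {x y d : ℝ} (hx : 0 < x) (hxy : x < y) (hd : 0 < d) :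
    Real.Gamma (x + d) * Real.Gamma y ≤ Real.Gamma x * Real.Gamma (y + d) := by
  have hy : 0 < y := hx.trans hxy
  have hL : 0 < y + d - x := by linarith
  have hyd : 0 < y + d := by linarith
  have hxd : 0 < x + d := by linarith
  have hconv := Real.convexOn_log_Gamma.2
  -- `x + d` and `y` are complementary convex combinations of `x` and `y + d`.
  have ht : 0 ≤ d / (y + d - x) := by positivity
  have hs : 0 ≤ (y - x) / (y + d - x) := div_nonneg (by linarith) hL.le
  have hst : (y - x) / (y + d - x) + d / (y + d - x) = 1 := by field_simp; ring
  have h1 := hconv (x := x) hx (y := y + d) hyd hs ht hst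
  have h2 := hconv (x := x) hx (y := y + d) hyd ht hs (by rw [add_comm]; exact hst)
  have e1 : (y - x) / (y + d - x) * x + d / (y + d - x) * (y + d) = x + d := by
    field_simp; ring
  have e2 : d / (y + d - x) * x + (y - x) / (y + d - x) * (y + d) = y := by
    field_simp; ring
  simp only [smul_eq_mul, Function.comp_apply, e1, e2] at h1 h2
  have gx := Real.Gamma_pos_of_pos hx
  have gy := Real.Gamma_pos_of_pos hy
  have gxd := Real.Gamma_pos_of_pos hxd
  have gyd := Real.Gamma_pos_of_pos hyd
  rw [← Real.log_le_log_iff (by positivity) (by positivity), Real.log_mul gxd.ne' gy.ne',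
    Real.log_mul gx.ne' gyd.ne']
  linear_combination h1 + h2 + (Real.log (Real.Gamma x) + Real.log (Real.Gamma (y + d))) * hst

/-- The difference of the two sides is `sin c * sin (v - u)`. -/
lemma cos_add_mul_cos_lt {u v c : ℝ} (hc : 0 < Real.sin c) (huv : 0 < Real.sin (v - u)) :
    Real.cos (c + v) * Real.cos u < Real.cos (c + u) * Real.cos v := by
  have h := mul_pos hc huv
  rw [Real.sin_sub] at h
  rw [Real.cos_add, Real.cos_add]
  linarith

lemma sin_add_sub_sin_eq (x y : ℝ) :
    Real.sin (2 * x + 2 * y) + Real.sin (2 * y) - Real.sin (2 * x) =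
      4 * Real.sin y * Real.cos (x + y) * Real.cos x := by
  rw [Real.sin_add, Real.sin_two_mul, Real.sin_two_mul, Real.cos_two_mul, Real.cos_two_mul,
    Real.cos_add]
  have h2 := Real.sin_sq_add_cos_sq y
  linear_combination (4 * Real.sin x * Real.cos x) * h2

/-- The product form of `T(a, b)` that reflection and the half-angle identity produce. -/
lemma Tconst_eq_mul {a b : ℝ} (ha : 0 < a) (hb : 0 < b) (hab : b < 1 - a) :
    Tconst a b = b * (2 * Real.Gamma (1 - a) * Real.cos (Real.pi * a / 2) *
      (Real.Gamma (a + b) / Real.Gamma (1 + b)) *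
      (Real.cos (Real.pi * (a + b) / 2) / Real.cos (Real.pi * b / 2))) := by
  have hpi := Real.pi_pos
  have sin_pos : ∀ s : ℝ, 0 < s → s < 1 → 0 < Real.sin (Real.pi * s) := fun s h0 h1 =>
    Real.sin_pos_of_pos_of_lt_pi (by positivity) (by nlinarith)
  have sa := sin_pos a ha (by linarith)
  have sb := sin_pos b hb (by linarith)
  have sab := sin_pos (a + b) (by linarith) (by linarith)
  have ra := Real.Gamma_mul_Gamma_one_sub a
  have rb := Real.Gamma_mul_Gamma_one_sub b
  have rab := Real.Gamma_mul_Gamma_one_sub (a + b)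
  rw [eq_div_iff sa.ne'] at ra
  rw [eq_div_iff sb.ne'] at rb
  rw [eq_div_iff sab.ne', ← sub_sub] at rab
  have ga := Real.Gamma_pos_of_pos ha
  have gb := Real.Gamma_pos_of_pos hb
  have gab := Real.Gamma_pos_of_pos (show 0 < 1 - a - b by linarith)
  have cb : 0 < Real.cos (Real.pi * b / 2) :=
    Real.cos_pos_of_mem_Ioo ⟨by nlinarith, by nlinarith⟩
  have key := sin_add_sub_sin_eq (Real.pi * a / 2) (Real.pi * b / 2)
  rw [show 2 * (Real.pi * a / 2) + 2 * (Real.pi * b / 2) = Real.pi * (a + b) by ring,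
    show 2 * (Real.pi * b / 2) = Real.pi * b by ring,
    show 2 * (Real.pi * a / 2) = Real.pi * a by ring,
    show Real.pi * a / 2 + Real.pi * b / 2 = Real.pi * (a + b) / 2 by ring] at key
  have sb2 : Real.sin (Real.pi * b) =
      2 * Real.sin (Real.pi * b / 2) * Real.cos (Real.pi * b / 2) := by
    rw [← Real.sin_two_mul]; congr 1; ring
  -- Reflection written for the reciprocals `1 / Γ`.
  have ia : (Real.Gamma a)⁻¹ = Real.Gamma (1 - a) * Real.sin (Real.pi * a) / Real.pi := by
    rw [eq_div_iff hpi.ne', inv_mul_eq_iff_eq_mul₀ ga.ne']; linear_combination -ra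
  have ib : (Real.Gamma b)⁻¹ = Real.Gamma (1 - b) * Real.sin (Real.pi * b) / Real.pi := by
    rw [eq_div_iff hpi.ne', inv_mul_eq_iff_eq_mul₀ gb.ne']; linear_combination -rb
  have iab : (Real.Gamma (1 - a - b))⁻¹ =
      Real.Gamma (a + b) * Real.sin (Real.pi * (a + b)) / Real.pi := by
    rw [eq_div_iff hpi.ne', inv_mul_eq_iff_eq_mul₀ gab.ne']; linear_combination -rab
  have hT : Tconst a b = Real.Gamma (a + b) * Real.Gamma (1 - a) * Real.Gamma (1 - b) / Real.pi *
      (Real.sin (Real.pi * (a + b)) + Real.sin (Real.pi * b) - Real.sin (Real.pi * a)) := by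
    have : Tconst a b = Real.Gamma (1 - a) * Real.Gamma (1 - b) * (Real.Gamma (1 - a - b))⁻¹ +
        Real.Gamma (a + b) * Real.Gamma (1 - a) * (Real.Gamma b)⁻¹ -
        Real.Gamma (a + b) * Real.Gamma (1 - b) * (Real.Gamma a)⁻¹ := by
      rw [Tconst, add_comm 1 b, add_comm 1 a, Real.Gamma_add_one ha.ne', Real.Gamma_add_one hb.ne']
      field_simp
    rw [this, ia, ib, iab]
    ring
  have hR : b * (2 * Real.Gamma (1 - a) * Real.cos (Real.pi * a / 2) *
      (Real.Gamma (a + b) / Real.Gamma (1 + b)) *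
      (Real.cos (Real.pi * (a + b) / 2) / Real.cos (Real.pi * b / 2))) =
      2 * Real.Gamma (1 - a) * Real.cos (Real.pi * a / 2) * Real.Gamma (a + b) *
        (Real.Gamma b)⁻¹ * Real.cos (Real.pi * (a + b) / 2) / Real.cos (Real.pi * b / 2) := by
    rw [add_comm 1 b, Real.Gamma_add_one hb.ne']
    field_simp
  rw [hT, hR, key, ib, sb2, eq_div_iff cb.ne']
  ring

/-- Strict monotonicity of the `b`-dependent factor of `T(a, b) / b`. -/
lemma Gamma_quot_mul_cos_quot_lt {a b₁ b₂ : ℝ} (ha : 0 < a) (h₁ : 0 < b₁) (h : b₁ < b₂)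
    (h₂ : b₂ < 1 - a) :
    (Real.Gamma (a + b₂) / Real.Gamma (1 + b₂)) *
        (Real.cos (Real.pi * (a + b₂) / 2) / Real.cos (Real.pi * b₂ / 2)) <
      (Real.Gamma (a + b₁) / Real.Gamma (1 + b₁)) *
        (Real.cos (Real.pi * (a + b₁) / 2) / Real.cos (Real.pi * b₁ / 2)) := by
  have hpi := Real.pi_pos
  have cos_pos : ∀ s : ℝ, 0 < s → s < 1 → 0 < Real.cos (Real.pi * s / 2) := fun s h0 h1 =>
    Real.cos_pos_of_mem_Ioo ⟨by nlinarith, by nlinarith⟩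
  have c1 := cos_pos b₁ h₁ (by linarith)
  have c2 := cos_pos b₂ (by linarith) (by linarith)
  have ca2 := cos_pos (a + b₂) (by linarith) (by linarith)
  have g1 := Real.Gamma_pos_of_pos (show 0 < 1 + b₁ by linarith)
  have g2 := Real.Gamma_pos_of_pos (show 0 < 1 + b₂ by linarith)
  have ga1 := Real.Gamma_pos_of_pos (show 0 < a + b₁ by linarith)
  apply mul_lt_mul' _ _ (by positivity) (by positivity)
  · rw [div_le_div_iff₀ g2 g1]
    have := Gamma_add_mul_Gamma_le (x := a + b₁) (y := 1 + b₁) (d := b₂ - b₁)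
      (by linarith) (by linarith) (by linarith)
    rwa [show a + b₁ + (b₂ - b₁) = a + b₂ by ring,
      show 1 + b₁ + (b₂ - b₁) = 1 + b₂ by ring] at this
  · rw [div_lt_div_iff₀ c2 c1]
    have sin_pos : ∀ s : ℝ, 0 < s → s < 1 → 0 < Real.sin (Real.pi * s / 2) := fun s h0 h1 =>
      Real.sin_pos_of_pos_of_lt_pi (by positivity) (by nlinarith)
    have := cos_add_mul_cos_lt (u := Real.pi * b₁ / 2) (v := Real.pi * b₂ / 2)
      (sin_pos a ha (by linarith)) (by
        have := sin_pos (b₂ - b₁) (by linarith) (by linarith)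
        rwa [show Real.pi * (b₂ - b₁) / 2 = Real.pi * b₂ / 2 - Real.pi * b₁ / 2 by ring] at this)
    rwa [show Real.pi * a / 2 + Real.pi * b₂ / 2 = Real.pi * (a + b₂) / 2 by ring,
      show Real.pi * a / 2 + Real.pi * b₁ / 2 = Real.pi * (a + b₁) / 2 by ring] at this

lemma continuousAt_Tconst_product {a b : ℝ} (ha : 0 < a) (hb : 0 ≤ b) (hab : b ≤ 1 - a) :
    ContinuousAt (fun b => b * (2 * Real.Gamma (1 - a) * Real.cos (Real.pi * a / 2) *
      (Real.Gamma (a + b) / Real.Gamma (1 + b)) *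
      (Real.cos (Real.pi * (a + b) / 2) / Real.cos (Real.pi * b / 2)))) b := by
  have hpi := Real.pi_pos
  have cb : 0 < Real.cos (Real.pi * b / 2) :=
    Real.cos_pos_of_mem_Ioo ⟨by nlinarith, by nlinarith⟩
  have gcont : ∀ c : ℝ, 0 < c + b → ContinuousAt (fun b => Real.Gamma (c + b)) b := by
    intro c hc
    have h : ContinuousAt Real.Gamma (c + b) :=
      (Real.differentiableAt_Gamma fun m => by
        have : (0 : ℝ) ≤ m := m.cast_nonneg
        linarith).continuousAt
    exact ContinuousAt.comp (f := fun b => c + b) h (by fun_prop)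
  have g1 := gcont a (by linarith)
  have g2 := gcont 1 (by linarith)
  have gne := (Real.Gamma_pos_of_pos (show 0 < 1 + b by linarith)).ne'
  refine continuousAt_id.mul ((continuousAt_const.mul (g1.div g2 gne)).mul
    (ContinuousAt.div (by fun_prop) (by fun_prop) cb.ne'))

/-- Properties of `β ↦ T(α,β)` for fixed `α ∈ (0,1)`: strictly positive on `(0,1-α)`,
vanishing at the endpoints (as limits), and `β ↦ T(α,β)/β` strictly decreasing
on `(0,1-α)`. -/
theorem Tconst_properties_in_second_variable (a : ℝ) (ha : a ∈ Set.Ioo (0 : ℝ) 1) :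
    (∀ b ∈ Set.Ioo (0 : ℝ) (1 - a), 0 < Tconst a b) ∧
    Filter.Tendsto (fun b => Tconst a b) (nhdsWithin 0 (Set.Ioi 0)) (nhds 0) ∧
    Filter.Tendsto (fun b => Tconst a b) (nhdsWithin (1 - a) (Set.Iio (1 - a))) (nhds 0) ∧
    StrictAntiOn (fun b => Tconst a b / b) (Set.Ioo 0 (1 - a)) := by
  obtain ⟨ha0, ha1⟩ := ha
  have h1a : 0 < 1 - a := by linarith
  have hpi := Real.pi_pos
  have cos_pos : ∀ s : ℝ, 0 < s → s < 1 → 0 < Real.cos (Real.pi * s / 2) := fun s h0 h1 =>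
    Real.cos_pos_of_mem_Ioo ⟨by nlinarith, by nlinarith⟩
  have ca := cos_pos a ha0 ha1
  have ga := Real.Gamma_pos_of_pos h1a
  refine ⟨?_, ?_, ?_, ?_⟩
  · rintro b ⟨hb0, hb1⟩
    rw [Tconst_eq_mul ha0 hb0 hb1]
    have cb := cos_pos b hb0 (by linarith)
    have cab := cos_pos (a + b) (by linarith) (by linarith)
    have g1 := Real.Gamma_pos_of_pos (show 0 < 1 + b by linarith)
    have g2 := Real.Gamma_pos_of_pos (show 0 < a + b by linarith)
    positivity
  · have h := (continuousAt_Tconst_product ha0 le_rfl h1a.le).tendsto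
    rw [zero_mul] at h
    refine (h.mono_left nhdsWithin_le_nhds).congr' ?_
    filter_upwards [Ioo_mem_nhdsGT h1a] with b hb
    exact (Tconst_eq_mul ha0 hb.1 hb.2).symm
  · have h := (continuousAt_Tconst_product ha0 h1a.le le_rfl).tendsto
    rw [show Real.pi * (a + (1 - a)) / 2 = Real.pi / 2 by ring, Real.cos_pi_div_two, zero_div,
      mul_zero, mul_zero] at h
    refine (h.mono_left nhdsWithin_le_nhds).congr' ?_
    filter_upwards [Ioo_mem_nhdsLT h1a] with b hb
    exact (Tconst_eq_mul ha0 hb.1 hb.2).symm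
  · rintro b₁ ⟨h10, h11⟩ b₂ ⟨h20, h21⟩ h
    simp only
    rw [Tconst_eq_mul ha0 h10 h11, Tconst_eq_mul ha0 h20 h21, mul_div_cancel_left₀ _ h10.ne',
      mul_div_cancel_left₀ _ h20.ne', mul_assoc, mul_assoc (2 * _ * _)]
    exact mul_lt_mul_of_pos_left (Gamma_quot_mul_cos_quot_lt ha0 h10 h h21) (by positivity)
end

section
/- Let α: ℝ → (1,2) satisfy liminf_{|x|→∞} α(x) > 1, let c: ℝ → (0,∞), and let {f_x : x ∈ ℝ} be a family of probability density functions with finite first moments satisfying condition (C3). Then limsup_{δ→0⁺} limsup_{|x|→∞} sgn(x)·((1+|x|)^{α(x)−1}/c(x))·∫_{−δ(1+|x|)}^{δ(1+|x|)} y f_x(y) dy = limsup_{|x|→∞} sgn(x)·((1+|x|)^{α(x)−1}/c(x))·∫_ℝ y f_x(y) dy. In particular, the drift condition limsup_{|x|→∞} sgn(x)·(|x|^{α(x)−1}/c(x))·∫_ℝ y f_x(y) dy < R is equivalent to the corresponding truncated condition limsup_{δ→0⁺} limsup_{|x|→∞} sgn(x)·((1+|x|)^{α(x)−1}/c(x))·∫_{−δ(1+|x|)}^{δ(1+|x|)}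 y f_x(y) dy < R, for any constant R. -/
/-!
Truncation removes from the drift the tail `∫_{|y| > δ(1+|x|)} y f_x(y) dy`. Pairing `y` with `-y`
turns this tail into `∫_{y > L} y (f_x(y) - f_x(-y)) dy` with `L = δ(1+|x|)`. By (C3) both densities
are `c(x) y^{-α(x)-1}` up to a relative error `ε`, so the leading terms cancel and the tail is at
most `2 ε c(x) L^{1-α(x)} / (α(x)-1)` (`abs_tail_le`). After multiplication by
`(1+|x|)^{α(x)-1} / c(x)` this is `2 ε δ^{1-α(x)} / (α(x)-1)`, and since `α` is eventually bounded
away from `1` it tends to `0` as `|x| → ∞` for each fixed `δ` (`tendsto_truncation_error`). Hence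
already the inner limsup does not depend on `δ ∈ (0,1)`. For the second part, the two normalizations
differ by the factor `(|x|/(1+|x|))^{α(x)-1} → 1` (`tendsto_norm_ratio`), which does not change a
limsup.
-/

open MeasureTheory Filter Topology Set
open scoped ENNReal

/-- Comparison of extended-real limsups through real upper bounds: it suffices that every eventual
real upper bound of `v` is, up to an arbitrarily small loss, an eventual upper bound of `u`. -/
lemma limsup_coe_le_of_forall {l : Filter ℝ} {u v : ℝ → ℝ}
    (h : ∀ M M' : ℝ, M < M' → (∀ᶠ x in l, v x < M) → ∀ᶠ x in l, u x < M') :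
    limsup (fun x => (u x : EReal)) l ≤ limsup (fun x => (v x : EReal)) l := by
  refine le_of_forall_gt_imp_ge_of_dense fun q hq => ?_
  obtain ⟨M', hM', hM'q⟩ := EReal.lt_iff_exists_real_btwn.1 hq
  obtain ⟨M, hM, hMM'⟩ := EReal.lt_iff_exists_real_btwn.1 hM'
  have hv : ∀ᶠ x in l, v x < M := by
    filter_upwards [eventually_lt_of_limsup_lt hM] with x hx using EReal.coe_lt_coe_iff.1 hx
  refine (limsup_le_of_le (a := (M' : EReal)) (by isBoundedDefault) ?_).trans hM'q.le
  filter_upwards [h M M' (EReal.coe_lt_coe_iff.1 hMM') hv] with x hx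
  exact EReal.coe_le_coe_iff.2 hx.le

lemma limsup_coe_le_of_tendsto_sub {l : Filter ℝ} {u v : ℝ → ℝ}
    (h : Tendsto (fun x => u x - v x) l (𝓝 0)) :
    limsup (fun x => (u x : EReal)) l ≤ limsup (fun x => (v x : EReal)) l := by
  refine limsup_coe_le_of_forall fun M M' hM hv => ?_
  filter_upwards [hv, h.eventually_lt_const (sub_pos.2 hM)] with x h1 h2
  linarith

lemma limsup_coe_le_of_tendsto_ratio {l : Filter ℝ} {u v r : ℝ → ℝ}
    (hr : Tendsto r l (𝓝 1)) (h : ∀ᶠ x in l, u x = r x * v x) :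
    limsup (fun x => (u x : EReal)) l ≤ limsup (fun x => (v x : EReal)) l := by
  refine limsup_coe_le_of_forall fun M M' hM hv => ?_
  have hrM : Tendsto (fun x => r x * M) l (𝓝 M) := by simpa using hr.mul_const M
  filter_upwards [hv, h, hr.eventually_const_lt one_pos, hrM.eventually_lt_const hM]
    with x h1 h2 h3 h4
  rw [h2]
  exact (mul_lt_mul_of_pos_left h1 h3).trans h4

/-- The tail first moment of a density close to a multiple of `|y|^{-s-1}` on both sides is small,
because the contributions of `y` and `-y` cancel to leading order. -/
lemma abs_tail_le {g : ℝ → ℝ} {s C ε L : ℝ} (hs : 1 < s) (hC : 0 < C) (hL : 0 < L)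
    (hg : Integrable fun y => y * g y)
    (hb : ∀ y : ℝ, L ≤ |y| → |g y * |y| ^ (s + 1) / C - 1| < ε) :
    |∫ y in (Icc (-L) L)ᶜ, y * g y| ≤ 2 * ε * C * (L ^ (1 - s) / (s - 1)) := by
  have hset : (Icc (-L) L)ᶜ = Iio (-L) ∪ Ioi L := by
    ext y
    simp only [mem_compl_iff, mem_Icc, mem_union, mem_Iio, mem_Ioi, not_and_or, not_le]
  have hdisj : Disjoint (Iio (-L)) (Ioi L) := by
    rw [Set.disjoint_left]
    intro y h1 h2
    simp only [mem_Iio, mem_Ioi] at h1 h2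
    linarith
  have hneg : ∫ y in Iio (-L), y * g y = ∫ y in Ioi L, (-y) * g (-y) := by
    rw [← integral_Iic_eq_integral_Iio, ← integral_comp_neg_Ioi]
  have hgneg : Integrable fun y => (-y) * g (-y) := hg.comp_neg
  rw [hset, setIntegral_union hdisj measurableSet_Ioi hg.integrableOn hg.integrableOn, hneg,
    ← integral_add hgneg.integrableOn hg.integrableOn]
  have hint : IntegrableOn (fun y : ℝ => 2 * ε * C * y ^ (-s)) (Ioi L) :=
    (integrableOn_Ioi_rpow_of_lt (by linarith) hL).const_mul _
  have hval : ∫ y in Ioi L, 2 * ε * C * y ^ (-s) = 2 * ε * C * (L ^ (1 - s) / (s - 1)) := by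
    rw [integral_const_mul, integral_Ioi_rpow_of_lt (by linarith) hL]
    rw [show -s + 1 = -(s - 1) by ring, show 1 - s = -(s - 1) by ring, neg_div_neg_eq]
  rw [← hval, ← Real.norm_eq_abs]
  refine norm_integral_le_of_norm_le hint ?_
  filter_upwards [ae_restrict_mem measurableSet_Ioi] with y hy
  have hyL : L < y := hy
  have hy0 : 0 < y := hL.trans hyL
  have h1 := hb y (by rw [abs_of_pos hy0]; exact hyL.le)
  have h2 := hb (-y) (by rw [abs_neg, abs_of_pos hy0]; exact hyL.le)
  rw [abs_neg] at h2
  rw [abs_of_pos hy0] at h1 h2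
  have hp : 0 < y ^ (-s) := Real.rpow_pos_of_pos hy0 _
  have hpow : y ^ (-s) * y ^ (s + 1) = y := by
    rw [← Real.rpow_add hy0]; simp
  -- `y (g y - g (-y))` is `C y^{-s}` times the difference of the two relative errors.
  have key : -y * g (-y) + y * g y = C * y ^ (-s) *
      ((g y * y ^ (s + 1) / C - 1) - (g (-y) * y ^ (s + 1) / C - 1)) := by
    have e1 : C * y ^ (-s) *
      ((g y * y ^ (s + 1) / C - 1) - (g (-y) * y ^ (s + 1) / C - 1))
        = (y ^ (-s) * y ^ (s + 1)) * (g y - g (-y)) := by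
      field_simp
      ring
    rw [e1, hpow]; ring
  rw [Real.norm_eq_abs, key, abs_mul, abs_of_pos (mul_pos hC hp)]
  have h3 : |(g y * y ^ (s + 1) / C - 1) - (g (-y) * y ^ (s + 1) / C - 1)| ≤ 2 * ε := by
    rw [abs_lt] at h1 h2
    rw [abs_le]
    constructor <;> linarith [h1.1, h1.2, h2.1, h2.2]
  calc C * y ^ (-s) * |(g y * y ^ (s + 1) / C - 1) - (g (-y) * y ^ (s + 1) / C - 1)|
      ≤ C * y ^ (-s) * (2 * ε) := by gcongr
    _ = 2 * ε * C * y ^ (-s) := by ring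

lemma tendsto_abs_cocompact_atTop : Tendsto (fun x : ℝ => |x|) (cocompact ℝ) atTop :=
  tendsto_norm_cocompact_atTop

/-- For fixed `δ ∈ (0,1)`, truncation at `δ(1+|x|)` changes the normalized drift by `o(1)`. -/
lemma tendsto_truncation_error
    (a c : ℝ → ℝ) (f : ℝ → ℝ → ℝ) (k : ℝ)
    (ha : ∀ x, a x ∈ Set.Ioo (1 : ℝ) 2) (hc : ∀ x, 0 < c x)
    (hmom : ∀ x, Integrable (fun y => y * f x y))
    (h3 : CondC3 a c f k) (hliminf : 1 < liminf a (cocompact ℝ))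
    {δ : ℝ} (hδ : 0 < δ) (hδ1 : δ < 1) :
    Tendsto (fun x => Real.sign x * ((1 + |x|) ^ (a x - 1) / c x) *
          (∫ y in Icc (-(δ * (1 + |x|))) (δ * (1 + |x|)), y * f x y) -
        Real.sign x * ((1 + |x|) ^ (a x - 1) / c x) * (∫ y, y * f x y))
      (cocompact ℝ) (𝓝 0) := by
  obtain ⟨b, hb1, hb⟩ := exists_between hliminf
  have hbdd : IsBoundedUnder (· ≥ ·) (cocompact ℝ) a :=
    isBoundedUnder_of ⟨1, fun x => (ha x).1.le⟩
  have hab : ∀ᶠ x in cocompact ℝ, b < a x := eventually_lt_of_lt_liminf hb hbdd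
  rw [Metric.tendsto_nhds]
  intro η hη
  have hb0 : 0 < b - 1 := sub_pos.2 hb1
  -- The normalized tail is at most `2 ε δ⁻¹ / (b - 1)`, which is `η / 2` for this `ε`.
  obtain ⟨R, hR⟩ := h3.2 (η * δ * (b - 1) / 4) (by positivity)
  filter_upwards [hab, tendsto_abs_cocompact_atTop.eventually_gt_atTop k,
    tendsto_abs_cocompact_atTop.eventually_ge_atTop (R / δ)] with x hx hxk hxR
  have hX : 0 < 1 + |x| := by positivity
  have hL : 0 < δ * (1 + |x|) := by positivity
  have hRL : R ≤ δ * (1 + |x|) := by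
    rw [div_le_iff₀ hδ] at hxR
    nlinarith
  have hxk' : x ∉ Icc (-k) k := fun h => absurd (abs_le.2 h) (not_le.2 hxk)
  have tail := abs_tail_le (ha x).1 (hc x) hL (hmom x)
    (fun y hy => hR y (hRL.trans hy) x hxk')
  have hsplit := integral_add_compl
    (measurableSet_Icc (a := -(δ * (1 + |x|))) (b := δ * (1 + |x|))) (hmom x)
  have hw : 0 < (1 + |x|) ^ (a x - 1) := Real.rpow_pos_of_pos hX _
  have hcx := hc x
  have ha0 : 0 < a x - 1 := sub_pos.2 (ha x).1
  have hsgn : |Real.sign x| ≤ 1 := by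
    rcases Real.sign_apply_eq x with h | h | h <;> simp [h]
  rw [Real.dist_eq, sub_zero, ← hsplit, ← mul_sub, sub_add_cancel_left, abs_mul, abs_neg,
    abs_mul, abs_of_pos (div_pos hw hcx)]
  have hδpow : δ ^ (1 - a x) ≤ δ⁻¹ := by
    rw [← Real.rpow_neg_one]
    exact Real.rpow_le_rpow_of_exponent_ge hδ hδ1.le (by linarith [(ha x).2])
  have hcancel : (1 + |x|) ^ (a x - 1) * (1 + |x|) ^ (1 - a x) = 1 := by
    rw [← Real.rpow_add hX]; simp
  calc |Real.sign x| * ((1 + |x|) ^ (a x - 1) / c x) *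
        |∫ y in (Icc (-(δ * (1 + |x|))) (δ * (1 + |x|)))ᶜ, y * f x y|
      ≤ 1 * ((1 + |x|) ^ (a x - 1) / c x) * (2 * (η * δ * (b - 1) / 4) * c x *
          ((δ * (1 + |x|)) ^ (1 - a x) / (a x - 1))) := by gcongr
    _ = ((1 + |x|) ^ (a x - 1) * (1 + |x|) ^ (1 - a x)) *
          (η * δ * (b - 1) / 2 * (δ ^ (1 - a x) / (a x - 1))) := by
        rw [Real.mul_rpow hδ.le hX.le]
        field_simp
        ring
    _ ≤ η * δ * (b - 1) / 2 * (δ⁻¹ / (b - 1)) := by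
        rw [hcancel, one_mul]
        gcongr
    _ = η / 2 := by field_simp
    _ < η := half_lt_self hη

lemma tendsto_norm_ratio (a : ℝ → ℝ) (ha : ∀ x, a x ∈ Set.Ioo (1 : ℝ) 2) :
    Tendsto (fun x : ℝ => (|x| / (1 + |x|)) ^ (a x - 1)) (cocompact ℝ) (𝓝 1) := by
  have hlow : Tendsto (fun x : ℝ => |x| / (1 + |x|)) (cocompact ℝ) (𝓝 1) := by
    have h1 : Tendsto (fun x : ℝ => 1 - (1 + |x|)⁻¹) (cocompact ℝ) (𝓝 (1 - 0)) :=
      (tendsto_inv_atTop_zero.comp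
        (tendsto_atTop_add_const_left _ 1 tendsto_abs_cocompact_atTop)).const_sub 1
    rw [sub_zero] at h1
    refine h1.congr fun x => ?_
    have hX : 0 < 1 + |x| := by positivity
    field_simp
    ring
  refine tendsto_of_tendsto_of_tendsto_of_le_of_le' hlow tendsto_const_nhds ?_ ?_
  · filter_upwards [tendsto_abs_cocompact_atTop.eventually_gt_atTop 0] with x hx
    have hX : 0 < 1 + |x| := by positivity
    have h1 : |x| / (1 + |x|) ≤ 1 := by rw [div_le_one hX]; linarith
    have := Real.rpow_le_rpow_of_exponent_ge (div_pos hx hX) h1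
      (show a x - 1 ≤ 1 by linarith [(ha x).2])
    rwa [Real.rpow_one] at this
  · refine Eventually.of_forall fun x => ?_
    have hX : 0 < 1 + |x| := by positivity
    exact Real.rpow_le_one (by positivity) (by rw [div_le_one hX]; linarith)
      (by linarith [(ha x).1])

/-- Under (C3), finite first moments and `liminf α > 1`, the truncated-drift iterated
limsup equals the full-drift limsup; in particular the drift condition (1.3) with bound
`R` is equivalent to the truncated condition (1.5). -/
theorem truncated_drift_condition_equivalence
    (a c : ℝ → ℝ) (f : ℝ → ℝ → ℝ) (k : ℝ)
    (ha : ∀ x, a x ∈ Set.Ioo (1 : ℝ) 2) (hc : ∀ x, 0 < c x)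
    (hf : IsDensityFamily f)
    (hmom : ∀ x, MeasureTheory.Integrable (fun y => y * f x y))
    (h3 : CondC3 a c f k)
    (hliminf : 1 < Filter.liminf a (cocompact ℝ)) :
    (Filter.limsup (fun δ : ℝ =>
        Filter.limsup (fun x => ((Real.sign x * ((1 + |x|) ^ (a x - 1) / c x) *
          (∫ y in Set.Icc (-(δ * (1 + |x|))) (δ * (1 + |x|)), y * f x y) : ℝ) : EReal))
          (cocompact ℝ)) (nhdsWithin 0 (Set.Ioi 0))
      = Filter.limsup (fun x => ((Real.sign x * ((1 + |x|) ^ (a x - 1) / c x) *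
          (∫ y, y * f x y) : ℝ) : EReal)) (cocompact ℝ)) ∧
    ∀ R : ℝ,
      (Filter.limsup (fun x => ((Real.sign x * (|x| ^ (a x - 1) / c x) *
          (∫ y, y * f x y) : ℝ) : EReal)) (cocompact ℝ) < ((R : ℝ) : EReal)
        ↔ Filter.limsup (fun δ : ℝ =>
            Filter.limsup (fun x => ((Real.sign x * ((1 + |x|) ^ (a x - 1) / c x) *
              (∫ y in Set.Icc (-(δ * (1 + |x|))) (δ * (1 + |x|)), y * f x y) : ℝ) : EReal))
              (cocompact ℝ)) (nhdsWithin 0 (Set.Ioi 0)) < ((R : ℝ) : EReal)) := by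
  have h1 : Filter.limsup (fun δ : ℝ =>
        Filter.limsup (fun x => ((Real.sign x * ((1 + |x|) ^ (a x - 1) / c x) *
          (∫ y in Set.Icc (-(δ * (1 + |x|))) (δ * (1 + |x|)), y * f x y) : ℝ) : EReal))
          (cocompact ℝ)) (nhdsWithin 0 (Set.Ioi 0))
      = Filter.limsup (fun x => ((Real.sign x * ((1 + |x|) ^ (a x - 1) / c x) *
          (∫ y, y * f x y) : ℝ) : EReal)) (cocompact ℝ) := by
    refine (limsup_congr ?_).trans (limsup_const _)
    filter_upwards [Ioo_mem_nhdsGT (zero_lt_one' ℝ)] with δ hδ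
    have ht := tendsto_truncation_error a c f k ha hc hmom h3 hliminf hδ.1 hδ.2
    refine le_antisymm (limsup_coe_le_of_tendsto_sub ht) (limsup_coe_le_of_tendsto_sub ?_)
    simpa using ht.neg
  refine ⟨h1, fun R => ?_⟩
  rw [h1]
  have hr := tendsto_norm_ratio a ha
  have hrinv : Tendsto (fun x : ℝ => ((|x| / (1 + |x|)) ^ (a x - 1))⁻¹) (cocompact ℝ) (𝓝 1) := by
    simpa using hr.inv₀ one_ne_zero
  have hratio : ∀ x : ℝ, Real.sign x * (|x| ^ (a x - 1) / c x) * (∫ y, y * f x y) =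
      (|x| / (1 + |x|)) ^ (a x - 1) *
        (Real.sign x * ((1 + |x|) ^ (a x - 1) / c x) * (∫ y, y * f x y)) := by
    intro x
    have hX : 0 < 1 + |x| := by positivity
    have hw : (1 + |x|) ^ (a x - 1) ≠ 0 := (Real.rpow_pos_of_pos hX _).ne'
    rw [Real.div_rpow (abs_nonneg x) hX.le]
    field_simp
  have h2 : Filter.limsup (fun x => ((Real.sign x * (|x| ^ (a x - 1) / c x) *
          (∫ y, y * f x y) : ℝ) : EReal)) (cocompact ℝ)
      = Filter.limsup (fun x => ((Real.sign x * ((1 + |x|) ^ (a x - 1) / c x) *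
          (∫ y, y * f x y) : ℝ) : EReal)) (cocompact ℝ) := by
    refine le_antisymm (limsup_coe_le_of_tendsto_ratio hr (Eventually.of_forall hratio))
      (limsup_coe_le_of_tendsto_ratio hrinv ?_)
    filter_upwards [hr.eventually_const_lt one_pos] with x hx
    rw [hratio x, inv_mul_cancel_left₀ hx.ne']
  rw [h2]
end
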